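/- Unconditionally, for any x ≥ 2 and any complex number s not equal to 1, not equal to a zero of ζ, and not in {-2, -4, -6, ...}, one has -ζ'/ζ(s) = Σ_{2 ≤ n ≤ x} Λ(n) n^{-s} · (log(x/n)/log x) + (1/log x)·(d/ds)(ζ'/ζ)(s) + (1/log x)·Σ_ρ m_ρ · x^{ρ-s}/(ρ-s)² + (1/log x)·Σ_{m=1}^{∞} x^{-2m-s}/(2m+s)² - x^{1-s}/((1-s)² log x), where ρ runs over the zeros of ζ with 0 < Re ρ < 1, each counted with its multiplicity m_ρ (order of vanishing of ζ at ρ). -/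

import Mathlib

open Complex

/-!
The entire function `(s - 1) ζ(s)` has order at most `3/2`, so the differences of its logarithmic
derivative have an absolutely convergent expansion over its zeros, with no Hadamard constant left
over. For `re z > max 1 (re s)` this expansion writes `-(ζ'/ζ)(z) / (z - s) ^ 2` as a sum over the
pole and the zeros, and each summand is the Mellin transform of an explicit function on `(0, 1]`.
The Dirichlet series of `-ζ'/ζ` exhibits the same function as the Mellin transform of
`∑ Λ(n) K(n t)`, where `K(t) = -t ^ (-s) log t` on `(0, 1]`. Both functions of `t` are continuous,
so Mellin inversion identifies them, and `t = 1/x` is the explicit formula.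
-/

open Filter Topology Metric

theorem exists_entire_eq_pow_analyticOrderNatAt_mul {f : ℂ → ℂ} (hf : Differentiable ℂ f)
    (hf₀ : f ≠ 0) (ρ : ℂ) :
    ∃ g : ℂ → ℂ, Differentiable ℂ g ∧ g ρ ≠ 0 ∧
      ∀ z, f z = (z - ρ) ^ analyticOrderNatAt f ρ * g z := by
  obtain ⟨p, hp⟩ := hf.analyticAt ρ
  have hp₀ : p ≠ 0 := fun h ↦ hf₀ <|
    AnalyticOnNhd.eq_of_eventuallyEq (fun z _ ↦ hf.analyticAt z) (fun z _ ↦ analyticAt_const)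
      (hp.locally_zero_iff.mpr h)
  have hdslope : ∀ n, Differentiable ℂ ((Function.swap dslope ρ)^[n] f) := fun n ↦ by
    induction n with
    | zero => exact hf
    | succ n ih =>
      rw [Function.iterate_succ_apply', ← differentiableOn_univ]
      exact (differentiableOn_dslope univ_mem).mpr ih.differentiableOn
  have horder : analyticOrderAt f ρ = p.order :=
    (hf.analyticAt ρ).analyticOrderAt_eq_natCast.mpr
      ⟨_, (hdslope p.order).analyticAt ρ, hp.iterate_dslope_fslope_ne_zero hp₀,
        .of_forall hp.eq_pow_order_mul_iterate_dslope⟩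
  refine ⟨_, hdslope p.order, hp.iterate_dslope_fslope_ne_zero hp₀, fun z ↦ ?_⟩
  rw [analyticOrderNatAt, horder, ENat.toNat_natCast]
  exact hp.eq_pow_order_mul_iterate_dslope z

theorem exists_entire_eq_prod_mul {f : ℂ → ℂ} (hf : Differentiable ℂ f) (hf₀ : f ≠ 0)
    (S : Finset ℂ) :
    ∃ g : ℂ → ℂ, Differentiable ℂ g ∧ (∀ ρ ∈ S, g ρ ≠ 0) ∧
      ∀ z, f z = (∏ ρ ∈ S, (z - ρ) ^ analyticOrderNatAt f ρ) * g z := by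
  induction S using Finset.induction_on with
  | empty => exact ⟨f, hf, by simp, by simp⟩
  | insert a S ha ih =>
    obtain ⟨g, hg, hgS, hfg⟩ := ih
    have hg₀ : g ≠ 0 := by
      rintro rfl
      exact hf₀ (funext fun z ↦ by simpa using hfg z)
    obtain ⟨h, hh, hha, hgh⟩ := exists_entire_eq_pow_analyticOrderNatAt_mul hg hg₀ a
    let P : ℂ → ℂ := fun z ↦ ∏ ρ ∈ S, (z - ρ) ^ analyticOrderNatAt f ρ
    have hprod : AnalyticAt ℂ P a := by fun_prop
    have hprod_ne : P a ≠ 0 :=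
      Finset.prod_ne_zero_iff.mpr fun ρ hρ ↦ pow_ne_zero _ <| sub_ne_zero.mpr <| by
        rintro rfl
        exact ha hρ
    have horder : analyticOrderNatAt f a = analyticOrderNatAt g a := by
      rw [analyticOrderNatAt, analyticOrderNatAt, funext hfg]
      rw [show (fun z ↦ (∏ ρ ∈ S, (z - ρ) ^ analyticOrderNatAt f ρ) * g z) = P * g from rfl,
        analyticOrderAt_mul hprod (hg.analyticAt a), hprod.analyticOrderAt_eq_zero.mpr hprod_ne,
        zero_add]
    refine ⟨h, hh, ?_, fun z ↦ ?_⟩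
    · intro ρ hρ
      rcases Finset.mem_insert.mp hρ with rfl | hρS
      · exact hha
      · exact right_ne_zero_of_mul (hgh ρ ▸ hgS ρ hρS)
    · rw [Finset.prod_insert ha, horder, hfg z, hgh z]
      ring

-- On the sphere of radius `3 R` each factor `z - ρ` is at least twice as large as it is at `0`, so
-- the maximum principle bounds the cofactor `g`.
theorem two_pow_mul_norm_cofactor_le {f g : ℂ → ℂ} {S : Finset ℂ} {m : ℂ → ℕ} {R B : ℝ}
    (hR : 0 < R) (hB₀ : 0 ≤ B) (hg : Differentiable ℂ g) (hS : ∀ ρ ∈ S, ‖ρ‖ ≤ R)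
    (hfg : ∀ z, f z = (∏ ρ ∈ S, (z - ρ) ^ m ρ) * g z)
    (hB : ∀ z, ‖z‖ = 3 * R → ‖f z‖ ≤ B * ‖f 0‖) {z : ℂ} (hz : ‖z‖ ≤ 3 * R) :
    2 ^ (∑ ρ ∈ S, m ρ) * ‖g z‖ ≤ B * ‖g 0‖ := by
  set N := ∑ ρ ∈ S, m ρ
  have hprod_zero : ‖f 0‖ ≤ R ^ N * ‖g 0‖ := by
    rw [hfg, norm_mul, norm_prod, ← Finset.prod_pow_eq_pow_sum]
    gcongr with ρ hρ
    simpa using pow_le_pow_left₀ (norm_nonneg ρ) (hS ρ hρ) _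
  have hprod_sphere : ∀ w, ‖w‖ = 3 * R → (2 * R) ^ N * ‖g w‖ ≤ ‖f w‖ := fun w hw ↦ by
    rw [hfg, norm_mul, norm_prod, ← Finset.prod_pow_eq_pow_sum]
    gcongr with ρ hρ
    rw [norm_pow]
    gcongr
    linarith [norm_sub_norm_le w ρ, hS ρ hρ]
  have hsphere : ∀ w ∈ frontier (ball (0 : ℂ) (3 * R)), ‖g w‖ ≤ B * ‖g 0‖ / 2 ^ N := fun w hw ↦ by
    have hw : ‖w‖ = 3 * R := by simpa [frontier_ball _ (by positivity : 3 * R ≠ 0)] using hw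
    rw [le_div_iff₀ (by positivity)]
    refine le_of_mul_le_mul_left ?_ (pow_pos hR N)
    calc R ^ N * (‖g w‖ * 2 ^ N) = (2 * R) ^ N * ‖g w‖ := by rw [mul_pow]; ring
      _ ≤ B * ‖f 0‖ := (hprod_sphere w hw).trans (hB w hw)
      _ ≤ B * (R ^ N * ‖g 0‖) := by gcongr
      _ = R ^ N * (B * ‖g 0‖) := by ring
  have := norm_le_of_forall_mem_frontier_norm_le isBounded_ball hg.diffContOnCl hsphere
    (by simpa [closure_ball _ (by positivity : 3 * R ≠ 0)] using hz)
  rwa [le_div_iff₀ (by positivity), mul_comm] at this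

theorem exists_eq_mul_exp_on_ball {g : ℂ → ℂ} {R : ℝ} (hR : 0 < R)
    (hg : DifferentiableOn ℂ g (ball 0 R)) (hne : ∀ z ∈ ball 0 R, g z ≠ 0) :
    ∃ h : ℂ → ℂ, h 0 = 0 ∧ (∀ z ∈ ball 0 R, HasDerivAt h (logDeriv g z) z) ∧
      ∀ z ∈ ball 0 R, g z = g 0 * exp (h z) := by
  have hd : DifferentiableOn ℂ (logDeriv g) (ball 0 R) :=
    (hg.deriv isOpen_ball).div hg hne
  obtain ⟨h, hh₀, hh⟩ := hd.isExactOn_ball.with_val_at 0 0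
  refine ⟨h, hh₀, hh, fun z hz ↦ ?_⟩
  have hderiv : ∀ w ∈ ball (0 : ℂ) R, HasDerivAt (fun w ↦ g w * exp (-h w)) 0 w := fun w hw ↦ by
    have hgw := (hg.differentiableAt (isOpen_ball.mem_nhds hw)).hasDerivAt
    refine (hgw.mul (hh w hw).neg.cexp).congr_deriv ?_
    rw [logDeriv_apply]
    field_simp [hne w hw]
    ring
  have hconst : g z * exp (-h z) = g 0 * exp (-h 0) :=
    isOpen_ball.is_const_of_deriv_eq_zero (convex_ball (0 : ℂ) R).isPreconnected
      (fun w hw ↦ (hderiv w hw).differentiableAt.differentiableWithinAt)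
      (fun w hw ↦ (hderiv w hw).deriv) hz (mem_ball_self hR)
  rw [hh₀, neg_zero, exp_zero, mul_one] at hconst
  rw [← hconst, mul_assoc, ← exp_add, neg_add_cancel, exp_zero, mul_one]

theorem norm_deriv_logDeriv_le {g : ℂ → ℂ} {R A : ℝ} (hR : 0 < R) (hA : 0 < A)
    (hg : DifferentiableOn ℂ g (ball 0 R)) (hne : ∀ z ∈ ball 0 R, g z ≠ 0)
    (hb : ∀ z ∈ ball 0 R, ‖g z‖ ≤ Real.exp A * ‖g 0‖) {z : ℂ} (hz : ‖z‖ ≤ R / 4) :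
    ‖deriv (logDeriv g) z‖ ≤ 64 * A / R ^ 2 := by
  obtain ⟨h, hh₀, hh, hgh⟩ := exists_eq_mul_exp_on_ball hR hg hne
  have hhd : DifferentiableOn ℂ h (ball 0 R) := fun w hw ↦
    (hh w hw).differentiableAt.differentiableWithinAt
  have hre : Set.MapsTo h (ball 0 R) {w | w.re ≤ A} := fun w hw ↦ by
    have hg₀ : 0 < ‖g 0‖ := norm_pos_iff.mpr (hne 0 (mem_ball_self hR))
    have := hb w hw
    rw [hgh w hw, norm_mul, norm_exp, mul_comm, mul_le_mul_iff_left₀ hg₀] at this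
    exact Real.exp_le_exp.mp this
  have hbound : ∀ w, ‖w‖ ≤ R / 2 → ‖h w‖ ≤ 2 * A := fun w hw ↦ by
    refine (borelCaratheodory_zero hA hhd hre hR (mem_ball_zero_iff.mpr (by linarith)) hh₀).trans ?_
    rw [div_le_iff₀ (by linarith)]
    gcongr
    linarith
  have hsub : closedBall z (R / 4) ⊆ ball 0 R :=
    closedBall_subset_ball' (by rw [dist_zero_right]; linarith)
  have hlog : deriv (logDeriv g) z = iteratedDeriv 2 h z := by
    rw [iteratedDeriv_succ, iteratedDeriv_one]
    refine EventuallyEq.deriv_eq ?_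
    filter_upwards [isOpen_ball.mem_nhds (hsub (mem_closedBall_self (by positivity)))] with w hw
    exact (hh w hw).deriv.symm
  calc ‖deriv (logDeriv g) z‖ = ‖iteratedDeriv 2 h z‖ := by rw [hlog]
    _ ≤ Nat.factorial 2 * (2 * A) / (R / 4) ^ 2 := by
      refine norm_iteratedDeriv_le_of_forall_mem_sphere_norm_le 2 (by positivity)
        ((hhd.mono hsub).diffContOnCl_ball subset_rfl) fun w hw ↦ hbound w ?_
      linarith [norm_sub_norm_le w z, mem_sphere_iff_norm.mp hw]
    _ = 64 * A / R ^ 2 := by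
      simp only [Nat.factorial_two, Nat.cast_ofNat]
      field_simp
      norm_num

-- The dyadic block `2 ^ n ≤ r i < 2 ^ (n + 1)` contributes `O (2 ^ (n * (τ - σ)))`.
theorem summable_div_rpow_of_sum_le {ι : Type*} {w r : ι → ℝ} {A τ σ : ℝ} (hw : ∀ i, 0 ≤ w i)
    (hr : ∀ i, 1 ≤ r i) (hσ : 0 ≤ σ) (hτσ : τ < σ)
    (hcount : ∀ R ≥ 1, ∀ S : Finset ι, (∀ i ∈ S, r i ≤ R) → ∑ i ∈ S, w i ≤ A * R ^ τ) :
    Summable fun i ↦ w i / r i ^ σ := by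
  choose κ hκ_le hκ_lt using fun i ↦ exists_nat_pow_near (hr i) one_lt_two
  have hA : 0 ≤ A := by simpa using hcount 1 le_rfl ∅ (by simp)
  set q : ℝ := 2 ^ (τ - σ)
  have hq : Summable fun n : ℕ ↦ A * 2 ^ τ * q ^ n :=
    (summable_geometric_of_lt_one (by positivity)
      (Real.rpow_lt_one_of_one_lt_of_neg one_lt_two (by linarith))).mul_left _
  refine summable_of_sum_le (fun i ↦ div_nonneg (hw i) (by have := hr i; positivity))
    (c := ∑' n : ℕ, A * 2 ^ τ * q ^ n) fun S ↦ ?_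
  have hblock : ∀ n, ∑ i ∈ S with κ i = n, w i / r i ^ σ ≤ A * 2 ^ τ * q ^ n := fun n ↦ by
    calc ∑ i ∈ S with κ i = n, w i / r i ^ σ
        ≤ ∑ i ∈ S with κ i = n, w i / (2 ^ n) ^ σ := by
          refine Finset.sum_le_sum fun i hi ↦ ?_
          obtain rfl := (Finset.mem_filter.mp hi).2
          exact div_le_div_of_nonneg_left (hw i) (by positivity)
            (Real.rpow_le_rpow (by positivity) (hκ_le i) hσ)
      _ = (∑ i ∈ S with κ i = n, w i) / (2 ^ n) ^ σ := (Finset.sum_div ..).symm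
      _ ≤ A * (2 ^ (n + 1)) ^ τ / (2 ^ n) ^ σ := by
          gcongr
          refine hcount _ (one_le_pow₀ one_le_two) _ fun i hi ↦ ?_
          obtain rfl := (Finset.mem_filter.mp hi).2
          exact (hκ_lt i).le
      _ = A * 2 ^ τ * q ^ n := by
          simp only [q, ← Real.rpow_natCast, ← Real.rpow_mul zero_le_two]
          rw [mul_assoc, mul_div_assoc, ← Real.rpow_sub two_pos, ← Real.rpow_add two_pos]
          push_cast
          ring_nf
  calc ∑ i ∈ S, w i / r i ^ σ
      = ∑ n ∈ S.image κ, ∑ i ∈ S with κ i = n, w i / r i ^ σ :=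
        (Finset.sum_fiberwise_of_maps_to (fun i hi ↦ Finset.mem_image_of_mem κ hi) _).symm
    _ ≤ ∑ n ∈ S.image κ, A * 2 ^ τ * q ^ n := Finset.sum_le_sum fun n _ ↦ hblock n
    _ ≤ ∑' n : ℕ, A * 2 ^ τ * q ^ n := hq.sum_le_tsum _ fun n _ ↦ by positivity

/-- `f` grows at most like `exp (C * (1 + |z|) ^ τ)` on `U`; for `U = univ` this says that `f` has
order at most `τ` (and finite type). -/
def ExpGrowthOn (τ : ℝ) (f : ℂ → ℂ) (U : Set ℂ) : Prop :=
  ∃ C : ℝ, ∀ z ∈ U, ‖f z‖ ≤ Real.exp (C * (1 + ‖z‖) ^ τ)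

theorem ExpGrowthOn.exists_norm_le_exp_mul_norm_zero {f : ℂ → ℂ} {τ : ℝ}
    (hf : ExpGrowthOn τ f Set.univ) (hτ : 0 ≤ τ) (hf₀ : f 0 ≠ 0) :
    ∃ A > 0, ∀ R ≥ 1, ∀ z, ‖z‖ ≤ 3 * R → ‖f z‖ ≤ Real.exp (A * R ^ τ) * ‖f 0‖ := by
  obtain ⟨C, hC⟩ := hf
  set L := Real.log ‖f 0‖
  refine ⟨|C| * 4 ^ τ + |L| + 1, by positivity, fun R hR z hz ↦ (hC z trivial).trans ?_⟩
  have hR₁ : 1 ≤ R ^ τ := Real.one_le_rpow hR hτ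
  have hpow : (1 + ‖z‖) ^ τ ≤ 4 ^ τ * R ^ τ := by
    rw [← Real.mul_rpow (by norm_num) (by linarith)]
    exact Real.rpow_le_rpow (by positivity) (by linarith) hτ
  rw [← Real.exp_log (norm_pos_iff.mpr hf₀), ← Real.exp_add, Real.exp_le_exp]
  calc C * (1 + ‖z‖) ^ τ ≤ |C| * (4 ^ τ * R ^ τ) := by
        gcongr
        exact le_abs_self C
    _ ≤ |C| * (4 ^ τ * R ^ τ) + (|L| * R ^ τ + L) + R ^ τ := by
        nlinarith [neg_abs_le L, abs_nonneg L]
    _ = (|C| * 4 ^ τ + |L| + 1) * R ^ τ + L := by ring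

theorem finite_zeros_norm_le {f : ℂ → ℂ} (hf : Differentiable ℂ f) (hf₀ : f ≠ 0) (R : ℝ) :
    {ρ : {ρ // f ρ = 0} | ‖(ρ : ℂ)‖ ≤ R}.Finite := by
  obtain ⟨a, ha⟩ := Function.ne_iff.mp hf₀
  have hcodiscrete : (f ⁻¹' {0})ᶜ ∈ codiscrete ℂ :=
    AnalyticOnNhd.preimage_zero_mem_codiscrete (fun z _ ↦ hf.analyticAt z) ha
  obtain ⟨hopen, hdiscrete⟩ := mem_codiscrete'.mp hcodiscrete
  rw [compl_compl] at hdiscrete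
  have hfinite : (closedBall 0 R ∩ f ⁻¹' {0}).Finite :=
    ((isCompact_closedBall 0 R).inter_right (isOpen_compl_iff.mp hopen)).finite
      (hdiscrete.mono Set.inter_subset_right)
  refine .of_finite_image (f := Subtype.val) (hfinite.subset ?_) Subtype.val_injective.injOn
  rintro _ ⟨ρ, hρ, rfl⟩
  exact ⟨by simpa using hρ, ρ.2⟩

theorem tendsto_toFinset_zeros_norm_le {f : ℂ → ℂ} (hf : Differentiable ℂ f) (hf₀ : f ≠ 0) :
    Tendsto (fun n : ℕ ↦ (finite_zeros_norm_le hf hf₀ n).toFinset) atTop atTop := by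
  refine tendsto_atTop_finset_of_monotone (fun k n hkn ↦ ?_) fun ρ ↦ ?_
  · exact Set.Finite.toFinset_subset_toFinset.mpr fun ρ (hρ : ‖(ρ : ℂ)‖ ≤ k) ↦
      hρ.trans (Nat.cast_le.mpr hkn)
  · simpa using exists_nat_ge ‖(ρ : ℂ)‖

section Hadamard

variable {f : ℂ → ℂ} {τ A : ℝ}

theorem sum_analyticOrderNatAt_le {R : ℝ} (hf : Differentiable ℂ f) (hf₀ : f 0 ≠ 0) (hR : 0 < R)
    (hA : ∀ z, ‖z‖ ≤ 3 * R → ‖f z‖ ≤ Real.exp A * ‖f 0‖) (S : Finset ℂ) (hS : ∀ ρ ∈ S, ‖ρ‖ ≤ R) :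
    ∑ ρ ∈ S, (analyticOrderNatAt f ρ : ℝ) ≤ A / Real.log 2 := by
  obtain ⟨g, hg, -, hfg⟩ := exists_entire_eq_prod_mul hf (fun h ↦ hf₀ (congrFun h 0)) S
  have hg₀ : 0 < ‖g 0‖ := norm_pos_iff.mpr (right_ne_zero_of_mul (hfg 0 ▸ hf₀))
  have h2 := two_pow_mul_norm_cofactor_le hR (Real.exp_nonneg A) hg hS hfg
    (fun z hz ↦ hA z hz.le) (z := 0) (by simpa using hR.le)
  rw [mul_le_mul_iff_left₀ hg₀, ← Real.log_le_iff_le_exp (by positivity), Real.log_pow] at h2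
  rw [le_div_iff₀ (Real.log_pos one_lt_two)]
  exact_mod_cast h2

theorem summable_analyticOrderNatAt_div_rpow {σ : ℝ} (hf : Differentiable ℂ f) (hf₀ : f 0 ≠ 0)
    (hgrowth : ExpGrowthOn τ f Set.univ) (hτ : 0 ≤ τ) (hτσ : τ < σ) :
    Summable fun ρ : {ρ // f ρ = 0} ↦ (analyticOrderNatAt f ρ : ℝ) / (1 + ‖(ρ : ℂ)‖) ^ σ := by
  obtain ⟨A, -, hA⟩ := hgrowth.exists_norm_le_exp_mul_norm_zero hτ hf₀
  refine summable_div_rpow_of_sum_le (A := A / Real.log 2) (τ := τ) (fun _ ↦ Nat.cast_nonneg _)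
    (fun ρ ↦ by simp) (hτ.trans hτσ.le) hτσ fun R hR S hS ↦ ?_
  rw [div_mul_eq_mul_div]
  refine (Finset.sum_map S (.subtype _) (fun ρ ↦ (analyticOrderNatAt f ρ : ℝ))).symm.trans_le ?_
  refine sum_analyticOrderNatAt_le hf hf₀ (by linarith) (hA R hR) _ fun ρ hρ ↦ ?_
  obtain ⟨ρ, hρS, rfl⟩ := Finset.mem_map.mp hρ
  simpa using (le_add_of_nonneg_left zero_le_one).trans (hS ρ hρS)

theorem summable_analyticOrderNatAt_div_mul (hf : Differentiable ℂ f) (hf₀ : f 0 ≠ 0)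
    (hgrowth : ExpGrowthOn τ f Set.univ) (hτ : 0 ≤ τ) (hτ2 : τ < 2) (z s : ℂ) :
    Summable fun ρ : {ρ // f ρ = 0} ↦ (analyticOrderNatAt f ρ : ℂ) / ((z - ρ) * (s - ρ)) := by
  refine .of_norm_bounded_eventually
    ((summable_analyticOrderNatAt_div_rpow hf hf₀ hgrowth hτ hτ2).mul_left 4) ?_
  filter_upwards [(finite_zeros_norm_le hf (fun h ↦ hf₀ (congrFun h 0))
    (2 * ‖z‖ + 2 * ‖s‖ + 1)).compl_mem_cofinite] with ρ hρ
  have hρ : 2 * ‖z‖ + 2 * ‖s‖ + 1 < ‖(ρ : ℂ)‖ := not_le.mp hρ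
  have hfactor : ∀ w : ℂ, 2 * ‖w‖ + 1 ≤ ‖(ρ : ℂ)‖ → 1 + ‖(ρ : ℂ)‖ ≤ 2 * ‖w - ρ‖ := fun w hw ↦ by
    linarith [norm_sub_norm_le (ρ : ℂ) w, norm_sub_rev (ρ : ℂ) w]
  have hz := hfactor z (by linarith [norm_nonneg s])
  have hs := hfactor s (by linarith [norm_nonneg z])
  have hpos : 0 < 1 + ‖(ρ : ℂ)‖ := by positivity
  rw [norm_div, norm_natCast, norm_mul, Real.rpow_two, ← mul_div_assoc, div_le_div_iff₀
    (mul_pos (by linarith) (by linarith)) (by positivity), sq]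
  calc (analyticOrderNatAt f ρ : ℝ) * ((1 + ‖(ρ : ℂ)‖) * (1 + ‖(ρ : ℂ)‖))
      ≤ analyticOrderNatAt f ρ * ((2 * ‖z - ρ‖) * (2 * ‖s - ρ‖)) := by gcongr
    _ = 4 * analyticOrderNatAt f ρ * (‖z - ρ‖ * ‖s - ρ‖) := by ring

theorem norm_dslope_le_of_norm_deriv_le {F : ℂ → ℂ} {U : Set ℂ} {C : ℝ} (hU : Convex ℝ U)
    (hF : ∀ z ∈ U, DifferentiableAt ℂ F z) (hC : ∀ z ∈ U, ‖deriv F z‖ ≤ C) {s z : ℂ} (hs : s ∈ U)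
    (hz : z ∈ U) : ‖dslope F s z‖ ≤ C := by
  rcases eq_or_ne z s with rfl | hzs
  · simpa using hC z hz
  · rw [dslope_of_ne F hzs, slope_def_field, norm_div, div_le_iff₀ (norm_sub_pos_iff.mpr hzs)]
    exact hU.norm_image_sub_le_of_norm_deriv_le hF hC hs hz

theorem dslope_inv_sub_const {ρ s z : ℂ} (hs : s ≠ ρ) (hz : z ≠ ρ) :
    dslope (fun w ↦ (w - ρ)⁻¹) s z = -((z - ρ) * (s - ρ))⁻¹ := by
  have hs' := sub_ne_zero.mpr hs
  have hz' := sub_ne_zero.mpr hz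
  rcases eq_or_ne z s with rfl | hzs
  · rw [dslope_same, (((hasDerivAt_id' z).sub_const ρ).fun_inv hz').deriv]
    field_simp
  · have := sub_ne_zero.mpr hzs
    rw [dslope_of_ne _ hzs, slope_def_field]
    field_simp
    ring

theorem dslope_sum_mul_add {ι : Type*} {S : Finset ι} {c : ι → ℂ} {F : ι → ℂ → ℂ} {G : ℂ → ℂ}
    {s : ℂ} (hF : ∀ i ∈ S, DifferentiableAt ℂ (F i) s) (hG : DifferentiableAt ℂ G s) (z : ℂ) :
    dslope (fun w ↦ ∑ i ∈ S, c i * F i w + G w) s z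
      = ∑ i ∈ S, c i * dslope (F i) s z + dslope G s z := by
  rcases eq_or_ne z s with rfl | hzs
  · have hsum : HasDerivAt (fun w ↦ ∑ i ∈ S, c i * F i w) (∑ i ∈ S, c i * deriv (F i) z) z :=
      .fun_sum fun i hi ↦ (hF i hi).hasDerivAt.const_mul _
    simpa using (hsum.fun_add hG.hasDerivAt).deriv
  · simp only [dslope_of_ne _ hzs, slope_def_field, mul_div_assoc', ← Finset.sum_div, ← add_div,
      mul_sub, Finset.sum_sub_distrib]
    ring

theorem logDeriv_prod_pow_mul {S : Finset ℂ} {m : ℂ → ℕ} {g : ℂ → ℂ} {z : ℂ}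
    (hS : ∀ ρ ∈ S, z ≠ ρ) (hg : DifferentiableAt ℂ g z) (hgz : g z ≠ 0) :
    logDeriv (fun w ↦ (∏ ρ ∈ S, (w - ρ) ^ m ρ) * g w) z
      = ∑ ρ ∈ S, m ρ * (z - ρ)⁻¹ + logDeriv g z := by
  have hne : ∀ ρ ∈ S, (z - ρ) ^ m ρ ≠ 0 := fun ρ hρ ↦ pow_ne_zero _ (sub_ne_zero.mpr (hS ρ hρ))
  rw [logDeriv_mul z (Finset.prod_ne_zero_iff.mpr hne) hgz (by fun_prop) hg,
    logDeriv_prod hne (by fun_prop)]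
  congr 1
  refine Finset.sum_congr rfl fun ρ _ ↦ ?_
  rw [logDeriv_fun_pow (by fun_prop)]
  simp [logDeriv_apply]

theorem dslope_logDeriv_prod_pow_mul {S : Finset ℂ} {m : ℂ → ℕ} {g : ℂ → ℂ} {s z : ℂ}
    (hg : Differentiable ℂ g) (hS : ∀ ρ ∈ S, s ≠ ρ ∧ z ≠ ρ) (hgs : g s ≠ 0) (hgz : g z ≠ 0) :
    dslope (logDeriv fun w ↦ (∏ ρ ∈ S, (w - ρ) ^ m ρ) * g w) s z
      = ∑ ρ ∈ S, -(m ρ / ((z - ρ) * (s - ρ))) + dslope (logDeriv g) s z := by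
  set F : ℂ → ℂ := logDeriv fun w ↦ (∏ ρ ∈ S, (w - ρ) ^ m ρ) * g w
  set G : ℂ → ℂ := fun w ↦ ∑ ρ ∈ S, m ρ * (w - ρ)⁻¹ + logDeriv g w
  have hFG : F =ᶠ[𝓝 s] G := by
    filter_upwards [(S.eventually_all (l := 𝓝 s)).mpr fun ρ hρ ↦ eventually_ne_nhds (hS ρ hρ).1,
      hg.continuous.continuousAt.eventually_ne hgs] with w hwS hgw
    exact logDeriv_prod_pow_mul hwS (hg w) hgw
  have hFGz : F z = G z := logDeriv_prod_pow_mul (fun ρ hρ ↦ (hS ρ hρ).2) (hg z) hgz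
  have hdslope : dslope F s z = dslope G s z := by
    rcases eq_or_ne z s with rfl | hzs
    · rw [dslope_same, dslope_same, hFG.deriv_eq]
    · simp only [dslope_of_ne _ hzs, slope_def_field, hFGz, hFG.eq_of_nhds]
  have hinv : ∀ ρ ∈ S, DifferentiableAt ℂ (fun w ↦ (w - ρ)⁻¹) s := fun ρ hρ ↦
    DifferentiableAt.fun_inv (by fun_prop) (sub_ne_zero.mpr (hS ρ hρ).1)
  have hlog : DifferentiableAt ℂ (logDeriv g) s := (hg.deriv s).div (hg s) hgs
  rw [hdslope, dslope_sum_mul_add hinv hlog]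
  congr 1
  refine Finset.sum_congr rfl fun ρ hρ ↦ ?_
  rw [dslope_inv_sub_const (hS ρ hρ).1 (hS ρ hρ).2, mul_neg, div_eq_mul_inv]

theorem norm_dslope_logDeriv_add_sum_le {S : Finset ℂ} {R : ℝ} (hf : Differentiable ℂ f)
    (hf₀ : f 0 ≠ 0) (hR : 0 < R) (hA₀ : 0 < A) (hA : ∀ z, ‖z‖ ≤ 3 * R → ‖f z‖ ≤ Real.exp A * ‖f 0‖)
    (hS : ∀ ρ, ρ ∈ S ↔ f ρ = 0 ∧ ‖ρ‖ ≤ R) {s z : ℂ} (hs : f s ≠ 0) (hz : f z ≠ 0)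
    (hsR : ‖s‖ ≤ R / 4) (hzR : ‖z‖ ≤ R / 4) :
    ‖dslope (logDeriv f) s z + ∑ ρ ∈ S, analyticOrderNatAt f ρ / ((z - ρ) * (s - ρ))‖
      ≤ 64 * A / R ^ 2 := by
  obtain ⟨g, hg, hgS, hfg⟩ := exists_entire_eq_prod_mul hf (fun h ↦ hf₀ (congrFun h 0)) S
  have hg_ne : ∀ w, ‖w‖ ≤ R → g w ≠ 0 := fun w hw hgw ↦
    hgS w ((hS w).mpr ⟨by rw [hfg, hgw, mul_zero], hw⟩) hgw
  have hg_le : ∀ w, ‖w‖ ≤ 3 * R → ‖g w‖ ≤ Real.exp A * ‖g 0‖ := fun w hw ↦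
    (le_mul_of_one_le_left (norm_nonneg _) (one_le_pow₀ one_le_two)).trans <|
      two_pow_mul_norm_cofactor_le hR (Real.exp_nonneg A) hg (fun ρ hρ ↦ ((hS ρ).mp hρ).2) hfg
        (fun z hz ↦ hA z hz.le) hw
  have hne : ∀ ρ ∈ S, s ≠ ρ ∧ z ≠ ρ := fun ρ hρ ↦ by
    have hfρ := ((hS ρ).mp hρ).1
    exact ⟨fun h ↦ hs (h ▸ hfρ), fun h ↦ hz (h ▸ hfρ)⟩
  rw [funext hfg, dslope_logDeriv_prod_pow_mul hg hne (hg_ne s (by linarith))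
    (hg_ne z (by linarith)), ← funext hfg, Finset.sum_neg_distrib, neg_add_eq_sub, sub_add_cancel]
  refine norm_dslope_le_of_norm_deriv_le (convex_closedBall (0 : ℂ) (R / 4)) (fun w hw ↦ ?_)
    (fun w hw ↦ ?_) (mem_closedBall_zero_iff.mpr hsR) (mem_closedBall_zero_iff.mpr hzR)
  · exact (hg.deriv w).div (hg w) (hg_ne w (by linarith [mem_closedBall_zero_iff.mp hw]))
  · exact norm_deriv_logDeriv_le hR hA₀ hg.differentiableOn
      (fun u hu ↦ hg_ne u (mem_ball_zero_iff.mp hu).le)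
      (fun u hu ↦ hg_le u (by linarith [mem_ball_zero_iff.mp hu])) (mem_closedBall_zero_iff.mp hw)

theorem hasSum_dslope_logDeriv (hf : Differentiable ℂ f) (hf₀ : f 0 ≠ 0)
    (hgrowth : ExpGrowthOn τ f Set.univ) (hτ : 0 ≤ τ) (hτ2 : τ < 2) {s z : ℂ} (hs : f s ≠ 0)
    (hz : f z ≠ 0) :
    HasSum (fun ρ : {ρ // f ρ = 0} ↦ -((analyticOrderNatAt f ρ : ℂ) / ((z - ρ) * (s - ρ))))
      (dslope (logDeriv f) s z) := by
  set a : {ρ // f ρ = 0} → ℂ := fun ρ ↦ analyticOrderNatAt f ρ / ((z - ρ) * (s - ρ))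
  have ha : Summable a := summable_analyticOrderNatAt_div_mul hf hf₀ hgrowth hτ hτ2 z s
  obtain ⟨A, hA₀, hA⟩ := hgrowth.exists_norm_le_exp_mul_norm_zero hτ hf₀
  have hf_ne : f ≠ 0 := fun h ↦ hf₀ (congrFun h 0)
  let T : ℕ → Finset {ρ // f ρ = 0} := fun n ↦ (finite_zeros_norm_le hf hf_ne n).toFinset
  have hbound : ∀ᶠ n : ℕ in atTop, ‖dslope (logDeriv f) s z + ∑ ρ ∈ T n, a ρ‖
      ≤ 64 * A * (n : ℝ) ^ (-(2 - τ)) := by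
    filter_upwards [eventually_ge_atTop 1, eventually_ge_atTop ⌈4 * ‖s‖⌉₊,
      eventually_ge_atTop ⌈4 * ‖z‖⌉₊] with n hn hns hnz
    have hn : (1 : ℝ) ≤ n := by exact_mod_cast hn
    rw [show ∑ ρ ∈ T n, a ρ = _ from (Finset.sum_map _ (.subtype _)
      (fun ρ : ℂ ↦ (analyticOrderNatAt f ρ : ℂ) / ((z - ρ) * (s - ρ)))).symm]
    refine (norm_dslope_logDeriv_add_sum_le hf hf₀ (R := n) (by positivity)
      (A := A * (n : ℝ) ^ τ) (by positivity) (hA n hn) (by simp [T, and_comm]) hs hz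
      (by linarith [Nat.ceil_le.mp hns]) (by linarith [Nat.ceil_le.mp hnz])).trans_eq ?_
    rw [neg_sub, Real.rpow_sub (by positivity), Real.rpow_two]
    ring
  have hlim : Tendsto (fun n : ℕ ↦ 64 * A * (n : ℝ) ^ (-(2 - τ))) atTop (𝓝 0) := by
    simpa using ((tendsto_rpow_neg_atTop (sub_pos.mpr hτ2)).comp
      tendsto_natCast_atTop_atTop).const_mul (64 * A)
  have hzero := squeeze_zero_norm' hbound hlim
  have hsum : dslope (logDeriv f) s z = -∑' ρ, a ρ := eq_neg_of_add_eq_zero_left <|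
    tendsto_nhds_unique
      ((ha.hasSum.comp (tendsto_toFinset_zeros_norm_le hf hf_ne)).const_add _) hzero
  exact hsum ▸ ha.hasSum.neg

end Hadamard

section ExpGrowth

variable {f g : ℂ → ℂ} {U V : Set ℂ} {τ : ℝ}

theorem ExpGrowthOn.of_norm_le (hg : ExpGrowthOn τ g U) (h : ∀ z ∈ U, ‖f z‖ ≤ ‖g z‖) :
    ExpGrowthOn τ f U :=
  let ⟨C, hC⟩ := hg
  ⟨C, fun z hz ↦ (h z hz).trans (hC z hz)⟩

theorem ExpGrowthOn.mono (hf : ExpGrowthOn τ f V) (hUV : U ⊆ V) : ExpGrowthOn τ f U :=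
  let ⟨C, hC⟩ := hf
  ⟨C, fun z hz ↦ hC z (hUV hz)⟩

theorem ExpGrowthOn.union (hU : ExpGrowthOn τ f U) (hV : ExpGrowthOn τ f V) :
    ExpGrowthOn τ f (U ∪ V) := by
  obtain ⟨C, hC⟩ := hU
  obtain ⟨D, hD⟩ := hV
  refine ⟨max C D, fun z hz ↦ ?_⟩
  rcases hz with hz | hz
  · exact (hC z hz).trans (Real.exp_le_exp.mpr (by gcongr; exact le_max_left C D))
  · exact (hD z hz).trans (Real.exp_le_exp.mpr (by gcongr; exact le_max_right C D))

theorem ExpGrowthOn.mul (hf : ExpGrowthOn τ f U) (hg : ExpGrowthOn τ g U) :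
    ExpGrowthOn τ (fun z ↦ f z * g z) U := by
  obtain ⟨C, hC⟩ := hf
  obtain ⟨D, hD⟩ := hg
  refine ⟨C + D, fun z hz ↦ ?_⟩
  rw [norm_mul, add_mul, Real.exp_add]
  exact mul_le_mul (hC z hz) (hD z hz) (norm_nonneg _) (Real.exp_nonneg _)

theorem ExpGrowthOn.of_norm_le_exp {C : ℝ} (hτ : 1 ≤ τ)
    (hf : ∀ z ∈ U, ‖f z‖ ≤ Real.exp (C * (1 + ‖z‖))) : ExpGrowthOn τ f U := by
  refine ⟨|C|, fun z hz ↦ (hf z hz).trans (Real.exp_le_exp.mpr ?_)⟩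
  gcongr
  · exact le_abs_self C
  · exact Real.self_le_rpow_of_one_le (by simp) hτ

theorem ExpGrowthOn.of_isCompact (hτ : 0 ≤ τ) (hU : IsCompact U) (hf : ContinuousOn f U) :
    ExpGrowthOn τ f U := by
  obtain ⟨B, hB⟩ := hU.exists_bound_of_continuousOn hf
  refine ⟨|B|, fun z hz ↦ (hB z hz).trans ?_⟩
  calc B ≤ |B| * 1 := by simpa using le_abs_self B
    _ ≤ |B| * (1 + ‖z‖) ^ τ := by gcongr; exact Real.one_le_rpow (by simp) hτ
    _ ≤ Real.exp (|B| * (1 + ‖z‖) ^ τ) := (Real.add_one_le_exp _).trans' (by simp)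

theorem ExpGrowthOn.comp_one_sub (hτ : 0 ≤ τ) (hf : ExpGrowthOn τ f U) :
    ExpGrowthOn τ (fun z ↦ f (1 - z)) ((1 - ·) ⁻¹' U) := by
  obtain ⟨C, hC⟩ := hf
  refine ⟨|C| * 2 ^ τ, fun z hz ↦ (hC _ hz).trans (Real.exp_le_exp.mpr ?_)⟩
  rw [mul_assoc, ← Real.mul_rpow zero_le_two (by positivity)]
  gcongr
  · exact le_abs_self C
  · linarith [norm_sub_le 1 z, norm_one (α := ℂ), norm_nonneg z]

theorem expGrowthOn_id (hτ : 1 ≤ τ) : ExpGrowthOn τ (fun z ↦ z) U :=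
  .of_norm_le_exp (C := 1) hτ fun z _ ↦ by linarith [Real.add_one_le_exp (1 * (1 + ‖z‖))]

end ExpGrowth

section GammaGrowth

theorem norm_cos_le_exp_norm (z : ℂ) : ‖cos z‖ ≤ Real.exp ‖z‖ := by
  have hpos := norm_exp_le_exp_norm (z * I)
  have hneg := norm_exp_le_exp_norm (-z * I)
  simp only [norm_mul, norm_neg, norm_I, mul_one] at hpos hneg
  rw [cos, norm_div, norm_ofNat, div_le_iff₀ two_pos]
  linarith [norm_add_le (exp (z * I)) (exp (-z * I))]

theorem norm_Gamma_le_Gamma_re {z : ℂ} (hz : 0 < z.re) : ‖Gamma z‖ ≤ Real.Gamma z.re := by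
  rw [Gamma_eq_integral hz, Real.Gamma_eq_integral hz, GammaIntegral]
  refine (MeasureTheory.norm_integral_le_integral_norm _).trans_eq ?_
  refine MeasureTheory.setIntegral_congr_fun measurableSet_Ioi fun t (ht : 0 < t) ↦ ?_
  simp only [norm_mul]
  rw [norm_cpow_eq_rpow_re_of_pos ht, norm_real, Real.norm_of_nonneg (Real.exp_nonneg _), sub_re,
    one_re]

theorem factorial_le_exp_rpow {n : ℕ} {x : ℝ} (hx : n ≤ x) :
    (n.factorial : ℝ) ≤ Real.exp (2 * x ^ (3 / 2 : ℝ)) := by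
  rcases n.eq_zero_or_pos with rfl | hn
  · simpa using Real.rpow_nonneg (by simpa using hx) _
  have hn : (0 : ℝ) < n := by exact_mod_cast hn
  calc (n.factorial : ℝ) ≤ (n : ℝ) ^ n := by exact_mod_cast n.factorial_le_pow
    _ = Real.exp (n * Real.log n) := by rw [← Real.log_pow, Real.exp_log (by positivity)]
    _ ≤ Real.exp (2 * x ^ (3 / 2 : ℝ)) := by
      refine Real.exp_le_exp.mpr ?_
      calc n * Real.log n ≤ n * ((n : ℝ) ^ (1 / 2 : ℝ) / (1 / 2)) := by
            gcongr
            exact Real.log_le_rpow_div hn.le one_half_pos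
        _ = 2 * (n : ℝ) ^ (3 / 2 : ℝ) := by
            rw [show (3 / 2 : ℝ) = 1 + 1 / 2 by norm_num, Real.rpow_one_add' hn.le (by norm_num)]
            ring
        _ ≤ 2 * x ^ (3 / 2 : ℝ) := by gcongr

theorem Gamma_le_exp_rpow {x : ℝ} (hx : 1 / 2 ≤ x) :
    Real.Gamma x ≤ 2 * Real.exp (2 * (x + 2) ^ (3 / 2 : ℝ)) := by
  have hceil : x ≤ ⌈x⌉₊ := Nat.le_ceil x
  have hΓ : 0 < Real.Gamma x := Real.Gamma_pos_of_pos (by linarith)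
  calc Real.Gamma x ≤ 2 * ((x + 1) * (x * Real.Gamma x)) := by
        nlinarith [mul_pos hΓ (by linarith : 0 < x)]
    _ = 2 * Real.Gamma (x + 2) := by
      rw [show x + 2 = x + 1 + 1 by ring, Real.Gamma_add_one (by linarith),
        Real.Gamma_add_one (by linarith)]
    _ ≤ 2 * Real.Gamma ((⌈x⌉₊ + 1 : ℕ) + 1) := by
      gcongr
      refine Real.Gamma_strictMonoOn_Ici.monotoneOn (Set.mem_Ici.mpr (by linarith))
        (Set.mem_Ici.mpr ?_) ?_ <;> push_cast <;> linarith
    _ = 2 * ((⌈x⌉₊ + 1).factorial : ℝ) := by rw [Real.Gamma_nat_eq_factorial]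
    _ ≤ 2 * Real.exp (2 * (x + 2) ^ (3 / 2 : ℝ)) := by
      gcongr
      refine factorial_le_exp_rpow ?_
      push_cast
      linarith [Nat.ceil_lt_add_one (by linarith : 0 ≤ x)]

theorem expGrowthOn_Gamma : ExpGrowthOn (3 / 2) Gamma {z | 1 / 2 ≤ z.re} := by
  refine ⟨1 + 2 * 2 ^ (3 / 2 : ℝ), fun z (hz : 1 / 2 ≤ z.re) ↦ ?_⟩
  have hre : z.re ≤ ‖z‖ := re_le_norm z
  have hone : 1 ≤ (1 + ‖z‖) ^ (3 / 2 : ℝ) := Real.one_le_rpow (by simp) (by norm_num)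
  calc ‖Gamma z‖ ≤ Real.Gamma z.re := norm_Gamma_le_Gamma_re (by linarith)
    _ ≤ 2 * Real.exp (2 * (z.re + 2) ^ (3 / 2 : ℝ)) := Gamma_le_exp_rpow hz
    _ ≤ Real.exp 1 * Real.exp (2 * (2 * (1 + ‖z‖)) ^ (3 / 2 : ℝ)) := by
      gcongr
      · linarith [Real.add_one_le_exp 1]
      · linarith
    _ ≤ Real.exp ((1 + 2 * 2 ^ (3 / 2 : ℝ)) * (1 + ‖z‖) ^ (3 / 2 : ℝ)) := by
      rw [← Real.exp_add, Real.mul_rpow zero_le_two (by positivity)]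
      gcongr
      linarith

end GammaGrowth

section FractIoi

open MeasureTheory Set Asymptotics

/-- The fractional part cut off to `(1, ∞)`; its Mellin transform at `-s` is
`∫ t in (1, ∞), {t} * t ^ (-s - 1)`. -/
noncomputable def fractIoi : ℝ → ℂ :=
  (Ioi 1).indicator fun t ↦ ((Int.fract t : ℝ) : ℂ)

theorem norm_fractIoi_le (t : ℝ) : ‖fractIoi t‖ ≤ (Ioi (1 : ℝ)).indicator 1 t := by
  unfold fractIoi
  by_cases ht : t ∈ Ioi 1
  · simp only [indicator_of_mem ht, Pi.one_apply, norm_real,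
      Real.norm_of_nonneg (Int.fract_nonneg t)]
    exact (Int.fract_lt_one t).le
  · simp [indicator_of_notMem ht]

theorem norm_fractIoi_le_one (t : ℝ) : ‖fractIoi t‖ ≤ 1 :=
  (norm_fractIoi_le t).trans (indicator_apply_le' (fun _ ↦ le_rfl) fun _ ↦ zero_le_one)

theorem measurable_fractIoi : Measurable fractIoi :=
  (measurable_ofReal.comp measurable_fract).indicator measurableSet_Ioi

theorem locallyIntegrable_fractIoi : LocallyIntegrable fractIoi := by
  refine (locallyIntegrable_const (1 : ℝ)).mono measurable_fractIoi.aestronglyMeasurable ?_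
  exact .of_forall fun t ↦ by simpa using norm_fractIoi_le_one t

theorem fractIoi_isBigO_atTop : fractIoi =O[atTop] (· ^ (-(0 : ℝ)) : ℝ → ℝ) :=
  .of_bound 1 <| .of_forall fun t ↦ by
    simpa using norm_fractIoi_le_one t

theorem fractIoi_isBigO_nhdsGT (b : ℝ) : fractIoi =O[𝓝[>] 0] (· ^ (-b) : ℝ → ℝ) := by
  refine (isBigO_zero _ _).congr' ?_ .rfl
  filter_upwards [Ioo_mem_nhdsGT one_pos] with t ht
  exact (indicator_of_notMem (by simpa using ht.2.le) _).symm

theorem mellinConvergent_fractIoi {s : ℂ} (hs : s.re < 0) : MellinConvergent fractIoi s :=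
  mellinConvergent_of_isBigO_rpow (locallyIntegrable_fractIoi.locallyIntegrableOn _)
    fractIoi_isBigO_atTop hs (fractIoi_isBigO_nhdsGT (s.re - 1)) (by linarith)

theorem differentiableAt_mellin_fractIoi {s : ℂ} (hs : s.re < 0) :
    DifferentiableAt ℂ (mellin fractIoi) s :=
  mellin_differentiableAt_of_isBigO_rpow (locallyIntegrable_fractIoi.locallyIntegrableOn _)
    fractIoi_isBigO_atTop hs (fractIoi_isBigO_nhdsGT (s.re - 1)) (by linarith)

theorem norm_mellin_fractIoi_le {s : ℂ} (hs : s.re < 0) : ‖mellin fractIoi s‖ ≤ (-s.re)⁻¹ := by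
  have hint : IntegrableOn (fun t : ℝ ↦ t ^ (s.re - 1)) (Ioi 1) :=
    integrableOn_Ioi_rpow_of_lt (by linarith) one_pos
  calc ‖mellin fractIoi s‖
      ≤ ∫ t in Ioi (0 : ℝ), (Ioi 1).indicator (fun t : ℝ ↦ t ^ (s.re - 1)) t := by
        refine norm_integral_le_of_norm_le ?_ ?_
        · exact ((integrable_indicator_iff measurableSet_Ioi).mpr hint).integrableOn
        · refine (ae_restrict_iff' measurableSet_Ioi).mpr (.of_forall fun t (ht : 0 < t) ↦ ?_)
          rw [norm_smul, norm_cpow_eq_rpow_re_of_pos ht, sub_re, one_re]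
          refine (mul_le_mul_of_nonneg_left (norm_fractIoi_le t) (by positivity)).trans_eq ?_
          by_cases h : t ∈ Ioi (1 : ℝ) <;> simp [h]
    _ = ∫ t in Ioi (1 : ℝ), t ^ (s.re - 1) := by
        rw [setIntegral_indicator measurableSet_Ioi, Ioi_inter_Ioi, max_eq_right zero_le_one]
    _ = (-s.re)⁻¹ := by
        rw [integral_Ioi_rpow_of_lt (by linarith) one_pos]
        simp [neg_div, inv_neg]

theorem mellin_fractIoi_neg {s : ℂ} (hs : 1 < s.re) :
    mellin fractIoi (-s) = 1 / (s - 1) - riemannZeta s / s := by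
  have hs₀ : s ≠ 0 := ne_zero_of_re_pos (by linarith)
  have hs₁ : s - 1 ≠ 0 := fun h ↦ by simp [sub_eq_zero.mp h] at hs
  have hint_id : IntegrableOn (fun t : ℝ ↦ (t : ℂ) ^ (-s)) (Ioi 1) :=
    integrableOn_Ioi_cpow_of_lt (by simpa using hs) one_pos
  have hfract : IntegrableOn (fun t : ℝ ↦ (t : ℂ) ^ (-s - 1) • fractIoi t) (Ioi 1) :=
    (mellinConvergent_fractIoi (by simpa using by linarith)).mono_set (Ioi_subset_Ioi zero_le_one)
  have hfloor : riemannZeta s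
      = s * ∫ t in Ioi (1 : ℝ), ((t : ℂ) ^ (-s) - (t : ℂ) ^ (-s - 1) • fractIoi t) := by
    rw [← LSeries_one_eq_riemannZeta hs, LSeries_eq_mul_integral' 1 zero_le_one hs ?_]
    · congr 1
      refine setIntegral_congr_fun measurableSet_Ioi fun t (ht : 1 < t) ↦ ?_
      have ht₀ : (t : ℂ) ≠ 0 := ofReal_ne_zero.mpr (by linarith)
      have hfloor_eq : ((⌊t⌋₊ : ℝ) : ℂ) = t - fractIoi t := by
        rw [fractIoi, indicator_of_mem (show t ∈ Ioi 1 from ht), ← ofReal_sub, Int.self_sub_fract,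
          natCast_floor_eq_intCast_floor (by linarith)]
      rw [ofReal_natCast] at hfloor_eq
      simp only [Pi.one_apply, Finset.sum_const, Nat.card_Icc, add_tsub_cancel_right, nsmul_eq_mul,
        mul_one, hfloor_eq, smul_eq_mul, neg_add']
      rw [sub_mul, cpow_sub _ _ ht₀, cpow_one]
      field_simp
    · simpa using isBigO_refl _ _
  have hmellin : mellin fractIoi (-s) = ∫ t in Ioi (1 : ℝ), (t : ℂ) ^ (-s - 1) • fractIoi t := by
    refine setIntegral_eq_of_subset_of_forall_sdiff_eq_zero measurableSet_Ioi
      (Ioi_subset_Ioi zero_le_one) fun t ht ↦ ?_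
    rw [fractIoi, indicator_of_notMem ht.2, smul_zero]
  rw [hfloor, integral_sub hint_id hfract, ← hmellin,
    integral_Ioi_cpow_of_lt (by simpa using hs) one_pos, ofReal_one, one_cpow]
  have : -s + 1 ≠ 0 := by rwa [neg_add_eq_sub, ← neg_ne_zero, neg_sub]
  field_simp
  ring

theorem riemannZeta₁_eq_sub_mul_mellin {s : ℂ} (hs : 0 < s.re) :
    riemannZeta₁ s = s - s * (s - 1) * mellin fractIoi (-s) := by
  have hU : IsOpen {z : ℂ | 0 < z.re} := isOpen_lt continuous_const continuous_re
  refine AnalyticOnNhd.eqOn_of_preconnected_of_eventuallyEq (𝕜 := ℂ) (U := {z | 0 < z.re})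
    (f := riemannZeta₁) (g := fun s ↦ s - s * (s - 1) * mellin fractIoi (-s)) (z₀ := 2)
    (fun z _ ↦ differentiable_riemannZeta₁.analyticAt z) (DifferentiableOn.analyticOnNhd ?_ hU)
    (convex_halfSpace_re_gt 0).isPreconnected (by simp) ?_ hs
  · intro z (hz : 0 < z.re)
    have := (differentiableAt_mellin_fractIoi (s := -z) (by simpa using hz)).comp z
      differentiableAt_id.neg
    exact (differentiableAt_id.sub ((differentiableAt_id.mul
      (differentiableAt_id.sub_const 1)).mul this)).differentiableWithinAt
  · filter_upwards [(isOpen_lt continuous_const continuous_re).mem_nhds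
      (show (2 : ℂ) ∈ {z | 1 < z.re} by simp)] with z (hz : 1 < z.re)
    have hz₀ : z ≠ 0 := ne_zero_of_re_pos (by linarith)
    have hz₁ : z ≠ 1 := fun h ↦ by simp [h] at hz
    have hz₁' := sub_ne_zero.mpr hz₁
    rw [mellin_fractIoi_neg hz, riemannZeta_eq_inv_sub_mul hz₁]
    field_simp
    ring

end FractIoi

section ZetaGrowth

theorem expGrowthOn_riemannZeta₁_half_le_re {τ : ℝ} (hτ : 1 ≤ τ) :
    ExpGrowthOn τ riemannZeta₁ {z | 1 / 2 ≤ z.re} := by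
  refine .of_norm_le_exp (C := 2) hτ fun z (hz : 1 / 2 ≤ z.re) ↦ ?_
  have hmellin : ‖mellin fractIoi (-z)‖ ≤ 2 :=
    (norm_mellin_fractIoi_le (by rw [neg_re]; linarith)).trans <| by
      rw [neg_re, neg_neg]
      exact inv_le_of_inv_le₀ two_pos (by simpa using hz)
  have hsub : ‖z - 1‖ ≤ ‖z‖ + 1 := by simpa using norm_sub_le z 1
  calc ‖riemannZeta₁ z‖ ≤ ‖z‖ + ‖z‖ * ‖z - 1‖ * ‖mellin fractIoi (-z)‖ := by
        rw [riemannZeta₁_eq_sub_mul_mellin (by linarith), ← norm_mul, ← norm_mul]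
        exact norm_sub_le _ _
    _ ≤ ‖z‖ + ‖z‖ * (‖z‖ + 1) * 2 := by gcongr
    _ ≤ (2 * (1 + ‖z‖)) ^ 2 / 2 := by nlinarith [norm_nonneg z]
    _ ≤ Real.exp (2 * (1 + ‖z‖)) := by
        linarith [Real.quadratic_le_exp_of_nonneg (x := 2 * (1 + ‖z‖)) (by positivity),
          norm_nonneg z]

theorem ne_neg_natCast_of_re_pos {w : ℂ} (hw : 0 < w.re) (n : ℕ) : w ≠ -n := by
  rintro rfl
  simp only [neg_re, natCast_re] at hw
  linarith [n.cast_nonneg (α := ℝ)]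

/-- The factor besides `cos (π * w / 2)` in the functional equation for `(w - 1) * ζ₁ (1 - w)`,
where `ζ₁ w = (w - 1) * ζ w`. It has no zeros on `1 ≤ re w`, so there the cosine accounts for all
zeros of `ζ₁ (1 - w)`. -/
noncomputable def zetaReflectionFactor (w : ℂ) : ℂ :=
  -2 * w * (2 * Real.pi) ^ (-w) * Gamma w * riemannZeta₁ w

theorem sub_one_mul_riemannZeta₁_one_sub {w : ℂ} (hw : 0 < w.re) (hw₁ : w ≠ 1) :
    (w - 1) * riemannZeta₁ (1 - w) = zetaReflectionFactor w * cos (Real.pi * w / 2) := by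
  have hw₀ : w ≠ 0 := ne_zero_of_re_pos hw
  have hsub : w - 1 ≠ 0 := sub_ne_zero.mpr hw₁
  have h := riemannZeta_one_sub (ne_neg_natCast_of_re_pos hw) hw₁
  rw [riemannZeta_eq_inv_sub_mul hw₁, riemannZeta_eq_inv_sub_mul (by simpa using hw₀),
    sub_sub_cancel_left] at h
  field_simp at h
  rw [zetaReflectionFactor, mul_comm (Real.pi : ℂ) w]
  linear_combination -h

theorem expGrowthOn_zetaReflectionFactor :
    ExpGrowthOn (3 / 2) zetaReflectionFactor {w | 1 / 2 ≤ w.re} := by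
  have hlin : (1 : ℝ) ≤ 3 / 2 := by norm_num
  have hpow : ExpGrowthOn (3 / 2) (fun w ↦ (2 * Real.pi : ℂ) ^ (-w)) {w | 1 / 2 ≤ w.re} :=
    .of_norm_le_exp (C := 0) hlin fun w (hw : 1 / 2 ≤ w.re) ↦ by
      have := norm_cpow_eq_rpow_re_of_pos Real.two_pi_pos (-w)
      push_cast at this
      rw [this, zero_mul, Real.exp_zero]
      exact Real.rpow_le_one_of_one_le_of_nonpos (by linarith [Real.pi_gt_three])
        (by rw [neg_re]; linarith)
  have hconst : ExpGrowthOn (3 / 2) (fun _ ↦ -2) {w | 1 / 2 ≤ w.re} :=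
    .of_norm_le_exp (C := 2) hlin fun w _ ↦ by
      rw [norm_neg, norm_ofNat]
      linarith [Real.add_one_le_exp (2 * (1 + ‖w‖)), norm_nonneg w]
  exact (((hconst.mul (expGrowthOn_id hlin)).mul hpow).mul expGrowthOn_Gamma).mul
    (expGrowthOn_riemannZeta₁_half_le_re hlin)

theorem expGrowthOn_cos_pi_mul_div_two {τ : ℝ} (hτ : 1 ≤ τ) :
    ExpGrowthOn τ (fun w ↦ cos (Real.pi * w / 2)) Set.univ :=
  .of_norm_le_exp (C := Real.pi) hτ fun w _ ↦ (norm_cos_le_exp_norm _).trans <| by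
    rw [norm_div, norm_mul, norm_real, Real.norm_of_nonneg Real.pi_pos.le, norm_ofNat]
    gcongr
    linarith [mul_nonneg Real.pi_pos.le (norm_nonneg w), Real.pi_pos]

theorem expGrowthOn_riemannZeta₁_one_sub :
    ExpGrowthOn (3 / 2) (fun w ↦ riemannZeta₁ (1 - w)) {w | 1 / 2 ≤ w.re} := by
  have hΦ := expGrowthOn_zetaReflectionFactor.mul <|
    (expGrowthOn_cos_pi_mul_div_two (by norm_num)).mono (Set.subset_univ _)
  have hnear : ExpGrowthOn (3 / 2) (fun w ↦ riemannZeta₁ (1 - w)) (closedBall 1 1) :=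
    .of_isCompact (by norm_num) (isCompact_closedBall 1 1)
      (differentiable_riemannZeta₁.continuous.comp (by fun_prop)).continuousOn
  have hfar : ExpGrowthOn (3 / 2) (fun w ↦ riemannZeta₁ (1 - w))
      ({w | 1 / 2 ≤ w.re} \ closedBall 1 1) := by
    refine (hΦ.mono Set.sdiff_subset).of_norm_le fun w hw ↦ ?_
    have hw_re : 1 / 2 ≤ w.re := hw.1
    have hw_norm : 1 < ‖w - 1‖ := by simpa [mem_closedBall, dist_eq_norm] using hw.2
    rw [← sub_one_mul_riemannZeta₁_one_sub (by linarith)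
      (by rintro rfl; simp at hw_norm; linarith), norm_mul]
    exact le_mul_of_one_le_left (norm_nonneg _) hw_norm.le
  exact (hnear.union hfar).mono fun w hw ↦ by by_cases h : w ∈ closedBall 1 1 <;> simp_all

theorem expGrowthOn_riemannZeta₁ : ExpGrowthOn (3 / 2) riemannZeta₁ Set.univ := by
  have hleft := expGrowthOn_riemannZeta₁_one_sub.comp_one_sub (by norm_num)
  simp only [sub_sub_cancel] at hleft
  refine ((expGrowthOn_riemannZeta₁_half_le_re (by norm_num)).union hleft).mono fun z _ ↦ ?_
  rcases le_total (1 / 2) z.re with hz | hz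
  · exact .inl hz
  · refine .inr ?_
    simp only [Set.mem_preimage, Set.mem_ofPred_eq, sub_re, one_re]
    linarith

end ZetaGrowth

section Zeros

theorem riemannZeta₁_zero_ne_zero : riemannZeta₁ 0 ≠ 0 := fun h ↦ by
  have := riemannZeta_eq_inv_sub_mul (zero_ne_one (α := ℂ))
  norm_num [h, riemannZeta_zero] at this

theorem riemannZeta₁_eq_zero_iff {s : ℂ} : riemannZeta₁ s = 0 ↔ riemannZeta s = 0 := by
  rcases eq_or_ne s 1 with rfl | hs
  · simp [riemannZeta₁_one, riemannZeta_one_ne_zero]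
  · simp [riemannZeta_eq_inv_sub_mul hs, sub_ne_zero.mpr hs]

theorem re_lt_one_of_riemannZeta₁_eq_zero {s : ℂ} (hs : riemannZeta₁ s = 0) : s.re < 1 :=
  lt_of_not_ge fun h ↦ riemannZeta_ne_zero_of_one_le_re h (riemannZeta₁_eq_zero_iff.mp hs)

section FunctionalEquation

variable {w : ℂ}

theorem zetaReflectionFactor_ne_zero (hw : 1 ≤ w.re) :
    zetaReflectionFactor w ≠ 0 := by
  have hw₀ : 0 < w.re := by linarith
  have hπ : (2 * Real.pi : ℂ) ≠ 0 := by exact_mod_cast Real.two_pi_pos.ne'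
  have hζ : riemannZeta₁ w ≠ 0 := fun h ↦ (re_lt_one_of_riemannZeta₁_eq_zero h).not_ge hw
  simp [zetaReflectionFactor, ne_zero_of_re_pos hw₀, hπ, Gamma_ne_zero_of_re_pos hw₀, hζ]

theorem differentiableAt_zetaReflectionFactor (hw : 0 < w.re) :
    DifferentiableAt ℂ zetaReflectionFactor w := by
  have hΓ := differentiableAt_Gamma w (ne_neg_natCast_of_re_pos hw)
  have hζ₁ := differentiable_riemannZeta₁ w
  have hπ : (2 * Real.pi : ℂ) ≠ 0 := by exact_mod_cast Real.two_pi_pos.ne'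
  unfold zetaReflectionFactor
  fun_prop (disch := simp [hπ])

theorem riemannZeta₁_one_sub_eq_zero_iff (hw : 1 ≤ w.re) (hw₁ : w ≠ 1) :
    riemannZeta₁ (1 - w) = 0 ↔ cos (Real.pi * w / 2) = 0 := by
  rw [← mul_right_inj' (sub_ne_zero.mpr hw₁), sub_one_mul_riemannZeta₁_one_sub (by linarith) hw₁,
    mul_zero, mul_eq_zero, or_iff_right (zetaReflectionFactor_ne_zero hw)]

theorem deriv_riemannZeta₁_one_sub_ne_zero (hw : 1 ≤ w.re) (hζ : riemannZeta₁ (1 - w) = 0) :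
    deriv riemannZeta₁ (1 - w) ≠ 0 := by
  intro hderiv
  have hw₀ : 0 < w.re := by linarith
  have hw₁ : w ≠ 1 := by rintro rfl; exact riemannZeta₁_zero_ne_zero (by simpa using hζ)
  have hcos := (riemannZeta₁_one_sub_eq_zero_iff hw hw₁).mp hζ
  have hsin : sin (Real.pi * w / 2) ≠ 0 := fun hsin ↦ by
    simpa [hcos, hsin] using sin_sq_add_cos_sq (Real.pi * w / 2)
  have hleft : HasDerivAt (fun u ↦ (u - 1) * riemannZeta₁ (1 - u)) 0 w := by
    have hcomp := (differentiable_riemannZeta₁ (1 - w)).hasDerivAt.comp_const_sub 1 w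
    exact (((hasDerivAt_id' w).sub_const 1).mul hcomp).congr_deriv (by simp [hζ, hderiv])
  have hright := (differentiableAt_zetaReflectionFactor hw₀).hasDerivAt.mul
    ((((hasDerivAt_id' w).const_mul (Real.pi : ℂ)).div_const 2).ccos)
  have heq : (fun u ↦ (u - 1) * riemannZeta₁ (1 - u)) =ᶠ[𝓝 w]
      fun u ↦ zetaReflectionFactor u * cos (Real.pi * u / 2) := by
    filter_upwards [(isOpen_lt continuous_const continuous_re).mem_nhds hw₀,
      isOpen_ne.mem_nhds hw₁] with u hu hu₁ using sub_one_mul_riemannZeta₁_one_sub hu hu₁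
  have := (hleft.congr_of_eventuallyEq heq.symm).unique hright
  simp [hcos, hsin, zetaReflectionFactor_ne_zero hw] at this

end FunctionalEquation

theorem riemannZeta₁_eq_zero_iff_of_re_nonpos {s : ℂ} (hs : s.re ≤ 0) :
    riemannZeta₁ s = 0 ↔ ∃ k : ℕ, s = -2 * (k + 1) := by
  constructor
  · intro hζ
    have hs₀ : s ≠ 0 := by rintro rfl; exact riemannZeta₁_zero_ne_zero hζ
    have hcos : cos (Real.pi * (1 - s) / 2) = 0 := by
      rw [← riemannZeta₁_one_sub_eq_zero_iff (by simpa using hs) (by simpa using hs₀)]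
      simpa using hζ
    obtain ⟨n, hn⟩ := cos_eq_zero_iff.mp hcos
    have hsn : s = -2 * n := by
      have : (Real.pi : ℂ) ≠ 0 := by exact_mod_cast Real.pi_ne_zero
      field_simp at hn
      linear_combination -hn
    have hn_pos : 0 < n := by
      have hn₀ : n ≠ 0 := by rintro rfl; simp [hsn] at hs₀
      have hre : (0 : ℝ) ≤ n := by
        simp only [hsn, mul_re, neg_re, re_ofNat, intCast_re] at hs
        norm_num at hs
        exact_mod_cast hs
      exact lt_of_le_of_ne (by exact_mod_cast hre) hn₀.symm
    obtain ⟨k, rfl⟩ := Int.eq_succ_of_zero_lt hn_pos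
    exact ⟨k, by simpa using hsn⟩
  · rintro ⟨k, rfl⟩
    exact riemannZeta₁_eq_zero_iff.mpr (riemannZeta_neg_two_mul_nat_add_one k)

theorem analyticOrderNatAt_riemannZeta₁_of_re_nonpos {s : ℂ} (hs : s.re ≤ 0)
    (hζ : riemannZeta₁ s = 0) : analyticOrderNatAt riemannZeta₁ s = 1 := by
  have hderiv := deriv_riemannZeta₁_one_sub_ne_zero (w := 1 - s) (by simpa using hs) (by simpa)
  rw [sub_sub_cancel] at hderiv
  have han := differentiable_riemannZeta₁.analyticAt s
  rw [analyticOrderNatAt, han.analyticOrderAt_eq_one_of_zero_deriv_ne_zero hζ hderiv]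
  rfl

theorem analyticOrderNatAt_riemannZeta₁_eq {ρ : ℂ} {n : ℕ} {g : ℂ → ℂ} (hρ : ρ ≠ 1)
    (hg : AnalyticAt ℂ g ρ) (hgρ : g ρ ≠ 0) (hζ : ∀ᶠ z in 𝓝 ρ, riemannZeta z = (z - ρ) ^ n * g z) :
    analyticOrderNatAt riemannZeta₁ ρ = n := by
  have han := differentiable_riemannZeta₁.analyticAt ρ
  have horder : analyticOrderAt riemannZeta₁ ρ = n := by
    refine han.analyticOrderAt_eq_natCast.mpr
      ⟨fun z ↦ (z - 1) * g z, by fun_prop, mul_ne_zero (sub_ne_zero.mpr hρ) hgρ, ?_⟩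
    filter_upwards [hζ, isOpen_ne.mem_nhds hρ] with z hz hz₁
    rw [riemannZeta_eq_inv_sub_mul hz₁, inv_mul_eq_iff_eq_mul₀ (sub_ne_zero.mpr hz₁)] at hz
    rw [hz, smul_eq_mul]
    ring
  rw [analyticOrderNatAt, horder, ENat.toNat_natCast]

end Zeros

section Mellin

open MeasureTheory

variable {f g : ℝ → ℂ} {b σ M N t : ℝ} {s z : ℂ}

/-- The continuous functions on `(0, ∞)` that vanish on `(1, ∞)` and are bounded by `M * t ^ (-b)`
on `(0, 1]`. Their Mellin transforms converge on `b < re z`, and the explicit constant `M` allows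
summation of families. -/
def IsPowBounded (b M : ℝ) (f : ℝ → ℂ) : Prop :=
  ContinuousOn f (Set.Ioi 0) ∧
    ∀ t ∈ Set.Ioi 0, ‖f t‖ ≤ M * (Set.Ioc 0 1).indicator (fun u : ℝ ↦ u ^ (-b)) t

theorem IsPowBounded.indicator (hf : ContinuousOn f (Set.Ioi 0)) (hf₁ : f 1 = 0)
    (hbound : ∀ t ∈ Set.Ioc 0 1, ‖f t‖ ≤ M * t ^ (-b)) :
    IsPowBounded b M ((Set.Ioc 0 1).indicator f) := by
  constructor
  · have hmin : ContinuousOn (fun t : ℝ ↦ f (min t 1)) (Set.Ioi 0) :=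
      hf.comp (by fun_prop) fun t (ht : 0 < t) ↦ lt_min ht one_pos
    refine hmin.congr fun t (ht : 0 < t) ↦ ?_
    rcases le_or_gt t 1 with h | h
    · simp [ht, h]
    · simp [h.not_ge, h.le, hf₁]
  · intro t _
    by_cases h : t ∈ Set.Ioc 0 1
    · simpa [h] using hbound t h
    · simp [h]

theorem IsPowBounded.const_mul (hf : IsPowBounded b M f) (c : ℂ) :
    IsPowBounded b (‖c‖ * M) (fun t ↦ c * f t) := by
  refine ⟨continuousOn_const.mul hf.1, fun t ht ↦ ?_⟩
  rw [norm_mul, mul_assoc]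
  exact mul_le_mul_of_nonneg_left (hf.2 t ht) (norm_nonneg c)

theorem IsPowBounded.sub (hf : IsPowBounded b M f) (hg : IsPowBounded b N g) :
    IsPowBounded b (M + N) (fun t ↦ f t - g t) := by
  refine ⟨hf.1.sub hg.1, fun t ht ↦ (norm_sub_le _ _).trans ?_⟩
  rw [add_mul]
  exact add_le_add (hf.2 t ht) (hg.2 t ht)

theorem continuousOn_ofReal_cpow_const (s : ℂ) :
    ContinuousOn (fun t : ℝ ↦ (t : ℂ) ^ s) (Set.Ioi 0) := fun _ ht ↦
  (continuousAt_ofReal_cpow_const _ _ (.inr (ne_of_gt ht))).continuousWithinAt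

theorem integrableOn_rpow_mul_indicator (hσ : b < σ) :
    IntegrableOn (fun t ↦ t ^ (σ - 1) * (Set.Ioc 0 1).indicator (fun u : ℝ ↦ u ^ (-b)) t)
      (Set.Ioi 0) := by
  have hpow : IntegrableOn (fun t : ℝ ↦ t ^ (σ - 1 - b)) (Set.Ioc 0 1) := by
    rw [← intervalIntegrable_iff_integrableOn_Ioc_of_le zero_le_one]
    exact intervalIntegral.intervalIntegrable_rpow' (by linarith)
  refine ((integrable_indicator_iff measurableSet_Ioc).mpr hpow).integrableOn.congr_fun
    (fun t (ht : 0 < t) ↦ ?_) measurableSet_Ioi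
  by_cases h : t ∈ Set.Ioc 0 1
  · simp only [h, Set.indicator_of_mem]
    rw [sub_eq_add_neg (σ - 1), Real.rpow_add ht]
  · simp [h]

theorem IsPowBounded.norm_cpow_smul_le (hf : IsPowBounded b M f) (ht : t ∈ Set.Ioi 0) :
    ‖(t : ℂ) ^ (z - 1) • f t‖
      ≤ M * (t ^ (z.re - 1) * (Set.Ioc 0 1).indicator (fun u : ℝ ↦ u ^ (-b)) t) := by
  rw [norm_smul, norm_cpow_eq_rpow_re_of_pos ht, sub_re, one_re, mul_left_comm]
  exact mul_le_mul_of_nonneg_left (hf.2 t ht) (Real.rpow_nonneg (le_of_lt ht) _)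

theorem IsPowBounded.mellinConvergent (hf : IsPowBounded b M f) (hz : b < z.re) :
    MellinConvergent f z := by
  refine ((integrableOn_rpow_mul_indicator hz).const_mul M).mono' ?_ ?_
  · exact ((continuousOn_ofReal_cpow_const _).smul hf.1).aestronglyMeasurable measurableSet_Ioi
  · exact (ae_restrict_iff' measurableSet_Ioi).mpr (.of_forall fun t ↦ hf.norm_cpow_smul_le)

theorem IsPowBounded.eq_zero_of_mellin_eq_zero (hf : IsPowBounded b M f) (hσ : b < σ)
    (hmellin : ∀ z : ℂ, z.re = σ → mellin f z = 0) (ht : 0 < t) : f t = 0 := by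
  have hline : ∀ y : ℝ, mellin f (σ + y * I) = 0 := fun y ↦ hmellin _ (by simp)
  rw [← mellinInv_mellin_eq σ f ht (hf.mellinConvergent (by simpa using hσ))
    (by simp [VerticalIntegrable, hline]) (hf.1.continuousAt (Ioi_mem_nhds ht))]
  simp [mellinInv, hline]

theorem IsPowBounded.eq_of_mellin_eq (hf : IsPowBounded b M f) (hg : IsPowBounded b N g)
    (hσ : b < σ) (hmellin : ∀ z : ℂ, z.re = σ → mellin f z = mellin g z) (ht : 0 < t) :
    f t = g t := by
  refine sub_eq_zero.mp ((hf.sub hg).eq_zero_of_mellin_eq_zero hσ (fun z hz ↦ ?_) ht)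
  rw [(hasMellin_sub (hf.mellinConvergent (hz ▸ hσ)) (hg.mellinConvergent (hz ▸ hσ))).2,
    hmellin z hz, sub_self]

section Series

variable {ι : Type*} {F : ι → ℝ → ℂ} {m : ι → ℝ}

theorem IsPowBounded.nonneg (hf : IsPowBounded b M f) : 0 ≤ M := by
  simpa using (norm_nonneg _).trans (hf.2 1 (Set.mem_Ioi.mpr one_pos))

theorem IsPowBounded.tsum (hb : 0 ≤ b) (hF : ∀ i, IsPowBounded b (m i) (F i)) (hm : Summable m) :
    IsPowBounded b (∑' i, m i) (fun t ↦ ∑' i, F i t) := by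
  constructor
  · intro t (ht : 0 < t)
    have hsub : Set.Ioi (t / 2) ⊆ Set.Ioi 0 := Set.Ioi_subset_Ioi (by positivity)
    refine ((continuousOn_tsum (fun i ↦ (hF i).1.mono hsub) (hm.mul_right ((t / 2) ^ (-b)))
      fun i u (hu : t / 2 < u) ↦ ((hF i).2 u (hsub hu)).trans ?_).continuousAt
      (Ioi_mem_nhds (half_lt_self ht))).continuousWithinAt
    refine mul_le_mul_of_nonneg_left (Set.indicator_apply_le' (fun _ ↦ ?_) fun _ ↦ ?_) (hF i).nonneg
    · exact Real.rpow_le_rpow_of_nonpos (by positivity) hu.le (neg_nonpos.mpr hb)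
    · positivity
  · intro t ht
    rw [← tsum_mul_right]
    exact tsum_of_norm_bounded (hm.mul_right _).hasSum fun i ↦ (hF i).2 t ht

theorem IsPowBounded.hasSum_mellin [Countable ι] (hF : ∀ i, IsPowBounded b (m i) (F i))
    (hm : Summable m) (hz : b < z.re) :
    HasSum (fun i ↦ mellin (F i) z) (mellin (fun t ↦ ∑' i, F i t) z) := by
  have hnorm (i : ι) : ∫ t in Set.Ioi (0 : ℝ), ‖(t : ℂ) ^ (z - 1) • F i t‖ ≤ m i * ∫ t in Set.Ioi 0,
      t ^ (z.re - 1) * (Set.Ioc 0 1).indicator (fun u : ℝ ↦ u ^ (-b)) t := by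
    rw [← integral_const_mul]
    exact setIntegral_mono_on ((hF i).mellinConvergent hz).norm
      ((integrableOn_rpow_mul_indicator hz).const_mul (m i)) measurableSet_Ioi
      fun _ ↦ (hF i).norm_cpow_smul_le
  have htsum : mellin (fun t ↦ ∑' i, F i t) z
      = ∫ t in Set.Ioi (0 : ℝ), ∑' i, (t : ℂ) ^ (z - 1) • F i t := by
    simp only [mellin, smul_eq_mul, tsum_mul_left]
  rw [htsum]
  exact hasSum_integral_of_summable_integral_norm (fun i ↦ (hF i).mellinConvergent hz)
    (.of_nonneg_of_le (fun _ ↦ integral_nonneg fun _ ↦ norm_nonneg _) hnorm (hm.mul_right _))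

end Series

end Mellin

section Kernels

variable {f : ℝ → ℂ} {a : ℕ → ℂ} {b M t r : ℝ} {s z ρ : ℂ}

theorem IsPowBounded.comp_mul_left (hf : IsPowBounded b M f) (hr : 1 ≤ r) :
    IsPowBounded b (r ^ (-b) * M) (fun t ↦ f (r * t)) := by
  have hr₀ : 0 < r := by linarith
  have hmaps : Set.MapsTo (r * ·) (Set.Ioi 0) (Set.Ioi 0) := fun t (ht : 0 < t) ↦ mul_pos hr₀ ht
  refine ⟨hf.1.comp (by fun_prop) hmaps, fun t ht ↦ (hf.2 _ (hmaps ht)).trans ?_⟩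
  have ht₀ : 0 < t := ht
  rw [mul_comm _ M, mul_assoc]
  refine mul_le_mul_of_nonneg_left ?_ hf.nonneg
  refine Set.indicator_apply_le' (fun h ↦ ?_) fun _ ↦ mul_nonneg (by positivity) ?_
  · have hmem : t ∈ Set.Ioc 0 1 := ⟨ht₀, by nlinarith [h.2]⟩
    rw [Set.indicator_of_mem hmem, Real.mul_rpow hr₀.le ht₀.le]
  · exact Set.indicator_apply_nonneg fun _ ↦ by positivity

theorem IsPowBounded.dirichlet_term (hf : IsPowBounded b M f) (ha : a 0 = 0) (n : ℕ) :
    IsPowBounded b (‖LSeries.term a b n‖ * M) (fun t ↦ a n * f (n * t)) := by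
  rcases n.eq_zero_or_pos with rfl | hn
  · simp [ha, IsPowBounded, continuousOn_const]
  · convert (hf.comp_mul_left (r := n) (by exact_mod_cast hn)).const_mul (a n) using 1
    rw [LSeries.norm_term_eq, if_neg hn.ne', ofReal_re, Real.rpow_neg n.cast_nonneg]
    ring

theorem mellin_dirichlet_term (ha : a 0 = 0) (n : ℕ) :
    mellin (fun t ↦ a n * f (n * t)) z = LSeries.term a z n * mellin f z := by
  rcases n.eq_zero_or_pos with rfl | hn
  · simp [ha, mellin]
  · have hdil := mellin_comp_mul_left f z (Nat.cast_pos.mpr hn : (0 : ℝ) < n)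
    have hsmul := mellin_const_smul (fun t ↦ f (n * t)) z (a n)
    simp only [smul_eq_mul] at hdil hsmul
    rw [hsmul, hdil, LSeries.term_of_ne_zero hn.ne', ofReal_natCast, cpow_neg]
    ring

theorem IsPowBounded.dirichletSeries (hf : IsPowBounded b M f) (hb : 0 ≤ b) (ha : a 0 = 0)
    (hsum : LSeriesSummable a b) :
    IsPowBounded b (∑' n, ‖LSeries.term a b n‖ * M) (fun t ↦ ∑' n, a n * f (n * t)) :=
  .tsum hb (hf.dirichlet_term ha) (hsum.norm.mul_right M)

theorem IsPowBounded.mellin_dirichletSeries (hf : IsPowBounded b M f) (ha : a 0 = 0)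
    (hsum : LSeriesSummable a b) (hz : b < z.re) :
    mellin (fun t ↦ ∑' n, a n * f (n * t)) z = LSeries a z * mellin f z := by
  rw [← (IsPowBounded.hasSum_mellin (hf.dirichlet_term ha) (hsum.norm.mul_right M) hz).tsum_eq,
    LSeries, ← tsum_mul_right]
  exact tsum_congr (mellin_dirichlet_term ha)

/-- The kernel `-log t * t ^ (-s)` on `(0, 1]`, whose Mellin transform is `(z - s)⁻²`. At
`t = n / x` it produces the weight `log (x / n) * n ^ (-s)`. -/
noncomputable def logKernel (s : ℂ) : ℝ → ℂ :=
  (Set.Ioc 0 1).indicator fun t ↦ -(Real.log t : ℂ) * (t : ℂ) ^ (-s)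

/-- The kernel `t ^ (-ρ) - t ^ (-s)` on `(0, 1]`, whose Mellin transform is
`(z - ρ)⁻¹ - (z - s)⁻¹`. The subtracted term makes it continuous at `1`. -/
noncomputable def cpowSubKernel (s ρ : ℂ) : ℝ → ℂ :=
  (Set.Ioc 0 1).indicator fun t ↦ (t : ℂ) ^ (-ρ) - (t : ℂ) ^ (-s)

theorem isPowBounded_logKernel (hs : s.re < b) : IsPowBounded b (1 / (b - s.re)) (logKernel s) := by
  refine .indicator ?_ (by simp) fun t ht ↦ ?_
  · exact ((continuous_ofReal.comp_continuousOn (Real.continuousOn_log.mono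
      fun t (ht : 0 < t) ↦ ht.ne')).neg).mul (continuousOn_ofReal_cpow_const _)
  · have hδ : 0 < b - s.re := sub_pos.mpr hs
    have hlog : |Real.log t| ≤ t ^ (-(b - s.re)) / (b - s.re) := by
      rw [abs_of_nonpos (Real.log_nonpos ht.1.le ht.2), ← Real.log_inv, Real.rpow_neg ht.1.le,
        ← Real.inv_rpow ht.1.le]
      exact Real.log_le_rpow_div (inv_nonneg.mpr ht.1.le) hδ
    rw [norm_mul, norm_neg, norm_real, Real.norm_eq_abs, norm_cpow_eq_rpow_re_of_pos ht.1, neg_re]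
    calc |Real.log t| * t ^ (-s.re) ≤ t ^ (-(b - s.re)) / (b - s.re) * t ^ (-s.re) :=
          mul_le_mul_of_nonneg_right hlog (Real.rpow_nonneg ht.1.le _)
      _ = 1 / (b - s.re) * t ^ (-b) := by
          rw [show -b = -(b - s.re) + -s.re by ring, Real.rpow_add ht.1]
          ring

theorem isPowBounded_cpowSubKernel (hρ : ρ.re ≤ b) (hs : s.re ≤ b) :
    IsPowBounded b 2 (cpowSubKernel s ρ) := by
  refine .indicator ?_ (by simp) fun t ht ↦ ?_
  · exact (continuousOn_ofReal_cpow_const _).sub (continuousOn_ofReal_cpow_const _)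
  · have hpow {w : ℂ} (hw : w.re ≤ b) : ‖(t : ℂ) ^ (-w)‖ ≤ t ^ (-b) := by
      rw [norm_cpow_eq_rpow_re_of_pos ht.1]
      exact Real.rpow_le_rpow_of_exponent_ge ht.1 ht.2 (by simpa using hw)
    linarith [norm_sub_le ((t : ℂ) ^ (-ρ)) ((t : ℂ) ^ (-s)), hpow hρ, hpow hs]

theorem mellin_cpowSubKernel (hρ : ρ.re < z.re) (hs : s.re < z.re) :
    mellin (cpowSubKernel s ρ) z = 1 / (z - ρ) - 1 / (z - s) := by
  have hρ' := hasMellin_cpow_Ioc (-ρ) (s := z) (by simpa using hρ)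
  have hs' := hasMellin_cpow_Ioc (-s) (s := z) (by simpa using hs)
  rw [sub_eq_add_neg z ρ, sub_eq_add_neg z s, ← hρ'.2, ← hs'.2, ← (hasMellin_sub hρ'.1 hs'.1).2,
    cpowSubKernel, Set.indicator_sub]

theorem mellin_logKernel (hs : s.re < z.re) : mellin (logKernel s) z = 1 / (z - s) ^ 2 := by
  set e : ℝ → ℂ := (Set.Ioc 0 1).indicator fun t ↦ (t : ℂ) ^ (-s)
  have hlocal : MeasureTheory.LocallyIntegrableOn e (Set.Ioi 0) :=
    ((continuousOn_ofReal_cpow_const _).locallyIntegrableOn measurableSet_Ioi).mono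
      ((measurable_ofReal.pow_const _).indicator measurableSet_Ioc).aestronglyMeasurable
      (.of_forall fun t ↦ norm_indicator_le_norm_self _ t)
  have htop : e =O[atTop] (· ^ (-(z.re + 1)) : ℝ → ℝ) := by
    refine (Asymptotics.isBigO_zero _ _).congr' ?_ .rfl
    filter_upwards [eventually_gt_atTop 1] with t ht
    exact (Set.indicator_of_notMem (fun h ↦ h.2.not_gt ht) _).symm
  have hbot : e =O[𝓝[>] 0] (· ^ (-s.re) : ℝ → ℝ) := by
    refine .of_bound 1 ?_
    filter_upwards [Ioc_mem_nhdsGT one_pos] with t ht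
    simp [e, ht, norm_cpow_eq_rpow_re_of_pos ht.1, le_abs_self]
  have hmellin_e : mellin e =ᶠ[𝓝 z] fun w ↦ (w - s)⁻¹ := by
    filter_upwards [(isOpen_lt continuous_const continuous_re).mem_nhds hs]
      with w (hw : s.re < w.re)
    have := (hasMellin_cpow_Ioc (-s) (s := w) (by simpa using hw)).2
    rw [this, ← sub_eq_add_neg, one_div]
  have hne : z - s ≠ 0 := fun h ↦ by simp [sub_eq_zero.mp h] at hs
  have hderiv := (mellin_hasDerivAt_of_isBigO_rpow hlocal htop (lt_add_one _) hbot hs).2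
  have hderiv_inv := (((hasDerivAt_id z).sub_const s).inv hne).congr_of_eventuallyEq hmellin_e
  have hlog : logKernel s = fun t ↦ (-1 : ℂ) • (Real.log t • e t) := by
    ext t
    by_cases ht : t ∈ Set.Ioc 0 1 <;> simp [logKernel, e, ht]
  rw [hlog, mellin_const_smul, hderiv.unique hderiv_inv]
  simp [neg_div]

end Kernels

section ZeroSum

variable {f : ℂ → ℂ} {τ b : ℝ} {s z : ℂ}

theorem countable_zeros (hf : Differentiable ℂ f) (hf₀ : f ≠ 0) :
    Countable {ρ : ℂ // f ρ = 0} := by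
  rw [← Set.countable_univ_iff]
  refine (Set.countable_iUnion fun n : ℕ ↦ (finite_zeros_norm_le hf hf₀ n).countable).mono
    fun ρ _ ↦ Set.mem_iUnion.mpr (exists_nat_ge ‖(ρ : ℂ)‖)

theorem isPowBounded_zero_term (hzeros : ∀ ρ, f ρ = 0 → ρ.re ≤ b) (hs : s.re ≤ b)
    (ρ : {ρ : ℂ // f ρ = 0}) :
    IsPowBounded b (‖(analyticOrderNatAt f ρ : ℂ) / ((s - ρ) * (s - ρ))‖ * 2)
      (fun t ↦ (analyticOrderNatAt f ρ : ℂ) / ((s - ρ) * (s - ρ)) * cpowSubKernel s ρ t) :=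
  (isPowBounded_cpowSubKernel (hzeros ρ ρ.2) hs).const_mul _

theorem isPowBounded_zero_sum (hf : Differentiable ℂ f) (hf₀ : f 0 ≠ 0)
    (hgrowth : ExpGrowthOn τ f Set.univ) (hτ : 0 ≤ τ) (hτ2 : τ < 2)
    (hzeros : ∀ ρ, f ρ = 0 → ρ.re ≤ b) (hb : 0 ≤ b) (hs : s.re ≤ b) :
    IsPowBounded b (∑' ρ : {ρ : ℂ // f ρ = 0},
        ‖(analyticOrderNatAt f ρ : ℂ) / ((s - ρ) * (s - ρ))‖ * 2)
      (fun t ↦ ∑' ρ : {ρ : ℂ // f ρ = 0},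
        (analyticOrderNatAt f ρ : ℂ) / ((s - ρ) * (s - ρ)) * cpowSubKernel s ρ t) :=
  .tsum hb (isPowBounded_zero_term hzeros hs)
    ((summable_analyticOrderNatAt_div_mul hf hf₀ hgrowth hτ hτ2 s s).norm.mul_right 2)

theorem mellin_zero_term {ρ : ℂ} (c : ℂ) (hρs : s ≠ ρ) (hρ : ρ.re < z.re) (hs : s.re < z.re) :
    mellin (fun t ↦ c / ((s - ρ) * (s - ρ)) * cpowSubKernel s ρ t) z
      = -(c / ((z - ρ) * (s - ρ))) / (z - s) := by
  have hzρ : z - ρ ≠ 0 := fun h ↦ by simp [sub_eq_zero.mp h] at hρ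
  have hzs : z - s ≠ 0 := fun h ↦ by simp [sub_eq_zero.mp h] at hs
  have hsρ : s - ρ ≠ 0 := sub_ne_zero.mpr hρs
  have hsmul := mellin_const_smul (cpowSubKernel s ρ) z (c / ((s - ρ) * (s - ρ)))
  simp only [smul_eq_mul] at hsmul
  rw [hsmul, mellin_cpowSubKernel hρ hs]
  field_simp
  ring

theorem mellin_zero_sum (hf : Differentiable ℂ f) (hf₀ : f 0 ≠ 0)
    (hgrowth : ExpGrowthOn τ f Set.univ) (hτ : 0 ≤ τ) (hτ2 : τ < 2)
    (hzeros : ∀ ρ, f ρ = 0 → ρ.re ≤ b) (hs : s.re ≤ b) (hfs : f s ≠ 0) (hz : b < z.re) :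
    mellin (fun t ↦ ∑' ρ : {ρ : ℂ // f ρ = 0},
        (analyticOrderNatAt f ρ : ℂ) / ((s - ρ) * (s - ρ)) * cpowSubKernel s ρ t) z
      = (logDeriv f z - logDeriv f s) / (z - s) ^ 2 := by
  have := countable_zeros hf fun h ↦ hf₀ (congrFun h 0)
  have hzs : z ≠ s := fun h ↦ (h ▸ hz).not_ge hs
  have hfz : f z ≠ 0 := fun h ↦ hz.not_ge (hzeros z h)
  have hmellin := IsPowBounded.hasSum_mellin (isPowBounded_zero_term hzeros hs)
    ((summable_analyticOrderNatAt_div_mul hf hf₀ hgrowth hτ hτ2 s s).norm.mul_right 2) hz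
  have hdslope := (hasSum_dslope_logDeriv hf hf₀ hgrowth hτ hτ2 hfs hfz).div_const (z - s)
  have hsρ (ρ : {ρ : ℂ // f ρ = 0}) : s ≠ ρ := fun h ↦ hfs (h ▸ ρ.2)
  have hterm (ρ : {ρ : ℂ // f ρ = 0}) := mellin_zero_term (analyticOrderNatAt f ρ) (hsρ ρ)
    ((hzeros ρ ρ.2).trans_lt hz) (hs.trans_lt hz)
  simp only [hterm] at hmellin
  rw [hmellin.unique hdslope, dslope_of_ne _ hzs, slope_def_field, div_div, sq]

end ZeroSum

section ExplicitFormula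

variable {s z : ℂ} {b t : ℝ}

theorem logDeriv_riemannZeta₁ (hs₁ : s ≠ 1) (hζ : riemannZeta s ≠ 0) :
    logDeriv riemannZeta₁ s = logDeriv riemannZeta s + 1 / (s - 1) := by
  have heq : riemannZeta₁ =ᶠ[𝓝 s] fun z ↦ (z - 1) * riemannZeta z := by
    filter_upwards [isOpen_ne.mem_nhds hs₁] with z hz
    rw [riemannZeta_eq_inv_sub_mul hz, mul_inv_cancel_left₀ (sub_ne_zero.mpr hz)]
  have hsub : s - 1 ≠ 0 := sub_ne_zero.mpr hs₁
  rw [logDeriv_apply, heq.deriv_eq, heq.eq_of_nhds, ← logDeriv_apply,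
    logDeriv_mul s hsub hζ (by fun_prop) (differentiableAt_riemannZeta hs₁)]
  simp [logDeriv_apply, add_comm]

theorem deriv_logDeriv_riemannZeta₁ (hs₁ : s ≠ 1) (hζ : riemannZeta s ≠ 0) :
    deriv (logDeriv riemannZeta₁) s = deriv (logDeriv riemannZeta) s - 1 / (s - 1) ^ 2 := by
  have hsub : s - 1 ≠ 0 := sub_ne_zero.mpr hs₁
  have hζ₁ : riemannZeta₁ s ≠ 0 := riemannZeta₁_eq_zero_iff.not.mpr hζ
  have heq : logDeriv riemannZeta =ᶠ[𝓝 s] fun z ↦ logDeriv riemannZeta₁ z - (z - 1)⁻¹ := by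
    filter_upwards [(differentiableAt_riemannZeta hs₁).continuousAt.eventually_ne hζ,
      eventually_ne_nhds hs₁] with z hz hz₁
    rw [logDeriv_riemannZeta₁ hz₁ hz, one_div, add_sub_cancel_right]
  have han := differentiable_riemannZeta₁.analyticAt s
  have hdiff : DifferentiableAt ℂ (logDeriv riemannZeta₁) s :=
    han.deriv.differentiableAt.div han.differentiableAt hζ₁
  have hinv : HasDerivAt (fun z : ℂ ↦ (z - 1)⁻¹) (-1 / (s - 1) ^ 2) s :=
    ((hasDerivAt_id s).sub_const 1).inv hsub
  rw [heq.deriv_eq, deriv_fun_sub hdiff hinv.differentiableAt, hinv.deriv]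
  ring

theorem mellin_tsum_vonMangoldt_mul_logKernel (hb : 1 < b) (hs : s.re < b)
    (hz : b < z.re) :
    mellin (fun t ↦ ∑' n : ℕ, (ArithmeticFunction.vonMangoldt n : ℂ) * logKernel s (n * t)) z
      = -logDeriv riemannZeta z / (z - s) ^ 2 := by
  rw [(isPowBounded_logKernel hs).mellin_dirichletSeries (by simp)
    (ArithmeticFunction.LSeriesSummable_vonMangoldt hb) hz,
    ArithmeticFunction.LSeries_vonMangoldt_eq_deriv_riemannZeta_div (hb.trans hz),
    mellin_logKernel (hs.trans hz), logDeriv_apply]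
  ring

/-- The inverse Mellin transform of `-(ζ'/ζ)(z) / (z - s) ^ 2`, read off from its poles: the pole
of `ζ`, the double pole at `s`, and the zeros of `ζ`. Every zero comes with a term `-t ^ (-s)` that
completes the double pole. -/
noncomputable def zetaResidueSum (s : ℂ) (t : ℝ) : ℂ :=
  1 / (s - 1) ^ 2 * cpowSubKernel s 1 t - logDeriv riemannZeta s * logKernel s t
    - ∑' ρ : {ρ : ℂ // riemannZeta₁ ρ = 0},
      (analyticOrderNatAt riemannZeta₁ ρ : ℂ) / ((s - ρ) * (s - ρ)) * cpowSubKernel s ρ t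

theorem isPowBounded_pole_term (hb : 1 < b) (hs : s.re < b) :
    IsPowBounded b (‖1 / (s - 1) ^ 2‖ * 2 + ‖logDeriv riemannZeta s‖ * (1 / (b - s.re)))
      (fun t ↦ 1 / (s - 1) ^ 2 * cpowSubKernel s 1 t - logDeriv riemannZeta s * logKernel s t) :=
  ((isPowBounded_cpowSubKernel (by simpa using hb.le) hs.le).const_mul _).sub
    ((isPowBounded_logKernel hs).const_mul _)

theorem isPowBounded_zetaZero_sum (hb : 1 < b) (hs : s.re < b) :
    IsPowBounded b (∑' ρ : {ρ : ℂ // riemannZeta₁ ρ = 0},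
        ‖(analyticOrderNatAt riemannZeta₁ ρ : ℂ) / ((s - ρ) * (s - ρ))‖ * 2)
      (fun t ↦ ∑' ρ : {ρ : ℂ // riemannZeta₁ ρ = 0},
        (analyticOrderNatAt riemannZeta₁ ρ : ℂ) / ((s - ρ) * (s - ρ)) * cpowSubKernel s ρ t) :=
  isPowBounded_zero_sum differentiable_riemannZeta₁ riemannZeta₁_zero_ne_zero
    expGrowthOn_riemannZeta₁ (by norm_num) (by norm_num)
    (fun _ hρ ↦ ((re_lt_one_of_riemannZeta₁_eq_zero hρ).trans hb).le) (by linarith) hs.le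

theorem mellin_pole_term (hb : 1 < b) (hs : s.re < b) (hz : b < z.re) :
    mellin (fun t ↦ 1 / (s - 1) ^ 2 * cpowSubKernel s 1 t
        - logDeriv riemannZeta s * logKernel s t) z
      = 1 / (s - 1) ^ 2 * (1 / (z - 1) - 1 / (z - s))
        - logDeriv riemannZeta s * (1 / (z - s) ^ 2) := by
  have hpole := (isPowBounded_cpowSubKernel (ρ := 1) (by simpa using hb.le)
    hs.le).mellinConvergent hz
  have hlog := (isPowBounded_logKernel hs).mellinConvergent hz
  have hpole_const := hasMellin_const_smul hpole (1 / (s - 1) ^ 2)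
  have hlog_const := hasMellin_const_smul hlog (logDeriv riemannZeta s)
  simp only [smul_eq_mul] at hpole_const hlog_const
  rw [(hasMellin_sub hpole_const.1 hlog_const.1).2, hpole_const.2, hlog_const.2,
    mellin_cpowSubKernel (by simpa using hb.trans hz) (hs.trans hz), mellin_logKernel (hs.trans hz)]

theorem mellin_zetaResidueSum (hs₁ : s ≠ 1) (hζ : riemannZeta s ≠ 0) (hb : 1 < b) (hs : s.re < b)
    (hz : b < z.re) :
    mellin (zetaResidueSum s) z = -logDeriv riemannZeta z / (z - s) ^ 2 := by
  have hz₁ : z ≠ 1 := ne_of_apply_ne re (hb.trans hz).ne'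
  have hzs : z ≠ s := ne_of_apply_ne re (hs.trans hz).ne'
  have hζz : riemannZeta z ≠ 0 := riemannZeta_ne_zero_of_one_le_re (hb.trans hz).le
  have hzeros := mellin_zero_sum differentiable_riemannZeta₁ riemannZeta₁_zero_ne_zero
    expGrowthOn_riemannZeta₁ (by norm_num) (by norm_num)
    (fun _ hρ ↦ ((re_lt_one_of_riemannZeta₁_eq_zero hρ).trans hb).le) hs.le
    (riemannZeta₁_eq_zero_iff.not.mpr hζ) hz
  have hsub := (hasMellin_sub ((isPowBounded_pole_term hb hs).mellinConvergent hz)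
    ((isPowBounded_zetaZero_sum hb hs).mellinConvergent hz)).2
  rw [mellin_pole_term hb hs hz, hzeros, logDeriv_riemannZeta₁ hz₁ hζz,
    logDeriv_riemannZeta₁ hs₁ hζ] at hsub
  refine hsub.trans ?_
  have hz₁' := sub_ne_zero.mpr hz₁
  have hzs' := sub_ne_zero.mpr hzs
  have hs₁' := sub_ne_zero.mpr hs₁
  field_simp
  ring

theorem tsum_vonMangoldt_mul_logKernel (hs₁ : s ≠ 1) (hζ : riemannZeta s ≠ 0) (ht : 0 < t) :
    ∑' n : ℕ, (ArithmeticFunction.vonMangoldt n : ℂ) * logKernel s (n * t)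
      = zetaResidueSum s t := by
  obtain ⟨b, hb⟩ := exists_gt (max 1 s.re)
  obtain ⟨hb₁, hbs⟩ := max_lt_iff.mp hb
  have hleft := (isPowBounded_logKernel hbs).dirichletSeries (zero_le_one.trans hb₁.le)
    (a := fun n ↦ (ArithmeticFunction.vonMangoldt n : ℂ)) (by simp)
    (ArithmeticFunction.LSeriesSummable_vonMangoldt (s := b) (by simpa using hb₁))
  have hright := (isPowBounded_pole_term hb₁ hbs).sub (isPowBounded_zetaZero_sum hb₁ hbs)
  refine hleft.eq_of_mellin_eq hright (lt_add_one b) (fun z hz ↦ ?_) ht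
  have hbz : b < z.re := hz ▸ lt_add_one b
  exact (mellin_tsum_vonMangoldt_mul_logKernel hb₁ hbs hbz).trans
    (mellin_zetaResidueSum hs₁ hζ hb₁ hbs hbz).symm

end ExplicitFormula

section Evaluation

variable {f : ℂ → ℂ} {τ b x : ℝ} {s ρ : ℂ}

theorem ofReal_inv_cpow_neg (hx : 0 ≤ x) (w : ℂ) : ((x⁻¹ : ℝ) : ℂ) ^ (-w) = (x : ℂ) ^ w := by
  rw [ofReal_inv, inv_cpow _ _ (by simp [arg_ofReal_of_nonneg hx, Real.pi_ne_zero.symm]), cpow_neg,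
    inv_inv]

theorem logKernel_natCast_mul_inv {n : ℕ} (hn : n ≠ 0) (hnx : n ≤ x) :
    logKernel s (n * x⁻¹) = (n : ℂ) ^ (-s) * Real.log (x / n) * (x : ℂ) ^ s := by
  have hn₀ : (0 : ℝ) < n := Nat.cast_pos.mpr hn.bot_lt
  have hx : 0 < x := hn₀.trans_le hnx
  have hmem : n * x⁻¹ ∈ Set.Ioc 0 1 := ⟨by positivity, by rwa [← div_eq_mul_inv, div_le_one hx]⟩
  have hcpow : ((n * x⁻¹ : ℝ) : ℂ) ^ (-s) = (n : ℂ) ^ (-s) * (x : ℂ) ^ s := by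
    rw [ofReal_mul, mul_cpow_ofReal_nonneg hn₀.le (inv_nonneg.mpr hx.le), ofReal_natCast,
      ofReal_inv_cpow_neg hx.le]
  rw [logKernel, Set.indicator_of_mem hmem, hcpow, ← div_eq_mul_inv, ← inv_div x n, Real.log_inv]
  push_cast
  ring

theorem logKernel_natCast_mul_inv_of_lt {n : ℕ} (hx : 0 < x) (hxn : x < n) :
    logKernel s (n * x⁻¹) = 0 := by
  refine Set.indicator_of_notMem (fun h ↦ h.2.not_gt ?_) _
  rwa [← div_eq_mul_inv, one_lt_div hx]

theorem cpowSubKernel_inv (hx : 1 ≤ x) : cpowSubKernel s ρ x⁻¹ = (x : ℂ) ^ ρ - (x : ℂ) ^ s := by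
  have hx₀ : 0 < x := one_pos.trans_le hx
  have hmem : x⁻¹ ∈ Set.Ioc 0 1 := ⟨inv_pos.mpr hx₀, inv_le_one_of_one_le₀ hx⟩
  rw [cpowSubKernel, Set.indicator_of_mem hmem, ofReal_inv_cpow_neg hx₀.le,
    ofReal_inv_cpow_neg hx₀.le]

theorem tsum_vonMangoldt_mul_logKernel_inv (hx : 0 < x) :
    ∑' n : ℕ, (ArithmeticFunction.vonMangoldt n : ℂ) * logKernel s (n * x⁻¹)
      = (∑ n ∈ Finset.Icc 2 ⌊x⌋₊, (ArithmeticFunction.vonMangoldt n : ℂ) * (n : ℂ) ^ (-s) *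
          Real.log (x / n)) * (x : ℂ) ^ s := by
  rw [tsum_eq_sum (s := Finset.Icc 2 ⌊x⌋₊), Finset.sum_mul]
  · refine Finset.sum_congr rfl fun n hn ↦ ?_
    obtain ⟨hn₂, hnx⟩ := Finset.mem_Icc.mp hn
    rw [logKernel_natCast_mul_inv (by lia) ((Nat.le_floor_iff hx.le).mp hnx)]
    ring
  · intro n hn
    rcases lt_or_ge n 2 with hn₂ | hn₂
    · interval_cases n <;> simp
    · have hxn : ⌊x⌋₊ < n := not_le.mp fun h ↦ hn (Finset.mem_Icc.mpr ⟨hn₂, h⟩)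
      rw [logKernel_natCast_mul_inv_of_lt hx ((Nat.floor_lt hx.le).mp hxn), mul_zero]

theorem summable_zero_sum (hf : Differentiable ℂ f) (hf₀ : f 0 ≠ 0)
    (hgrowth : ExpGrowthOn τ f Set.univ) (hτ : 0 ≤ τ) (hτ2 : τ < 2)
    (hzeros : ∀ ρ, f ρ = 0 → ρ.re ≤ b) (hx : 1 ≤ x) (s : ℂ) :
    Summable fun ρ : {ρ : ℂ // f ρ = 0} ↦
      (analyticOrderNatAt f ρ : ℂ) * (x : ℂ) ^ ((ρ : ℂ) - s) / ((ρ : ℂ) - s) ^ 2 := by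
  have hsum := summable_analyticOrderNatAt_div_mul hf hf₀ hgrowth hτ hτ2 s s
  refine .of_norm_bounded (hsum.norm.mul_left (x ^ (b - s.re))) fun ρ ↦ ?_
  have hpow : ‖(x : ℂ) ^ ((ρ : ℂ) - s)‖ ≤ x ^ (b - s.re) := by
    rw [norm_cpow_eq_rpow_re_of_pos (one_pos.trans_le hx), sub_re]
    exact Real.rpow_le_rpow_of_exponent_le hx (sub_le_sub_right (hzeros ρ ρ.2) _)
  rw [mul_comm, mul_div_assoc, norm_mul, show ((ρ : ℂ) - s) ^ 2 = (s - ρ) * (s - ρ) by ring]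
  exact mul_le_mul_of_nonneg_right hpow (norm_nonneg _)

theorem tsum_zeros_mul_cpowSubKernel_inv (hf : Differentiable ℂ f) (hf₀ : f 0 ≠ 0)
    (hgrowth : ExpGrowthOn τ f Set.univ) (hτ : 0 ≤ τ) (hτ2 : τ < 2)
    (hzeros : ∀ ρ, f ρ = 0 → ρ.re ≤ b) (hx : 1 ≤ x) (hfs : f s ≠ 0) :
    ∑' ρ : {ρ : ℂ // f ρ = 0},
        (analyticOrderNatAt f ρ : ℂ) / ((s - ρ) * (s - ρ)) * cpowSubKernel s ρ x⁻¹
      = (∑' ρ : {ρ : ℂ // f ρ = 0},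
          (analyticOrderNatAt f ρ : ℂ) * (x : ℂ) ^ ((ρ : ℂ) - s) / ((ρ : ℂ) - s) ^ 2
        + deriv (logDeriv f) s) * (x : ℂ) ^ s := by
  have hsum := (summable_zero_sum hf hf₀ hgrowth hτ hτ2 hzeros hx s).hasSum
  have hderiv := hasSum_dslope_logDeriv hf hf₀ hgrowth hτ hτ2 hfs hfs
  rw [dslope_same] at hderiv
  rw [← ((hsum.add hderiv).mul_right _).tsum_eq]
  refine tsum_congr fun ρ ↦ ?_
  rw [cpowSubKernel_inv hx, ← sub_add_cancel (ρ : ℂ) s,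
    cpow_add _ _ (ofReal_ne_zero.mpr (one_pos.trans_le hx).ne'), sub_add_cancel]
  ring

theorem sum_vonMangoldt_mul_log (hx : 1 ≤ x) (hs₁ : s ≠ 1) (hζ : riemannZeta s ≠ 0) :
    ∑ n ∈ Finset.Icc 2 ⌊x⌋₊,
        (ArithmeticFunction.vonMangoldt n : ℂ) * (n : ℂ) ^ (-s) * Real.log (x / n)
      = (x : ℂ) ^ (1 - s) / (1 - s) ^ 2 - logDeriv riemannZeta s * Real.log x
        - deriv (logDeriv riemannZeta) s
        - ∑' ρ : {ρ : ℂ // riemannZeta₁ ρ = 0}, (analyticOrderNatAt riemannZeta₁ ρ : ℂ)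
          * (x : ℂ) ^ ((ρ : ℂ) - s) / ((ρ : ℂ) - s) ^ 2 := by
  have hx₀ : 0 < x := one_pos.trans_le hx
  have hxs : (x : ℂ) ^ s ≠ 0 := by simp [cpow_eq_zero_iff, hx₀.ne']
  have hsub : s - 1 ≠ 0 := sub_ne_zero.mpr hs₁
  have hkernel := tsum_vonMangoldt_mul_logKernel hs₁ hζ (inv_pos.mpr hx₀)
  have hlog : logKernel s x⁻¹ = Real.log x * (x : ℂ) ^ s := by
    simpa using logKernel_natCast_mul_inv (s := s) one_ne_zero (by simpa using hx)
  have hpole : (x : ℂ) ^ (1 : ℂ) = (x : ℂ) ^ (1 - s) * (x : ℂ) ^ s := by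
    rw [← cpow_add _ _ (ofReal_ne_zero.mpr hx₀.ne'), sub_add_cancel]
  rw [tsum_vonMangoldt_mul_logKernel_inv hx₀, zetaResidueSum, hlog, cpowSubKernel_inv hx, hpole,
    tsum_zeros_mul_cpowSubKernel_inv differentiable_riemannZeta₁ riemannZeta₁_zero_ne_zero
      expGrowthOn_riemannZeta₁ (by norm_num) (by norm_num)
      (fun _ hρ ↦ (re_lt_one_of_riemannZeta₁_eq_zero hρ).le) hx
      (riemannZeta₁_eq_zero_iff.not.mpr hζ), deriv_logDeriv_riemannZeta₁ hs₁ hζ] at hkernel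
  refine mul_right_cancel₀ hxs (hkernel.trans ?_)
  rw [← neg_sub s 1, neg_sq]
  field_simp
  ring

theorem re_neg_two_mul_add_one_neg (k : ℕ) : (-2 * (k + 1) : ℂ).re < 0 := by
  have : (-2 * (k + 1) : ℂ) = (-2 * (k + 1) : ℝ) := by push_cast; rfl
  rw [this, ofReal_re]
  linarith [k.cast_nonneg (α := ℝ)]

theorem riemannZeta₁_eq_zero_iff_nontrivial_or_trivial :
    riemannZeta₁ ρ = 0 ↔
      (riemannZeta ρ = 0 ∧ 0 < ρ.re ∧ ρ.re < 1) ∨ ∃ k : ℕ, -2 * (k + 1) = ρ := by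
  rcases lt_or_ge 0 ρ.re with hre | hre
  · have hne (k : ℕ) : -2 * (k + 1) ≠ ρ := by
      rintro rfl
      exact hre.not_ge (re_neg_two_mul_add_one_neg k).le
    simp only [hne, exists_false, or_false, hre, true_and]
    exact ⟨fun h ↦ ⟨riemannZeta₁_eq_zero_iff.mp h, re_lt_one_of_riemannZeta₁_eq_zero h⟩,
      fun h ↦ riemannZeta₁_eq_zero_iff.mpr h.1⟩
  · simp only [riemannZeta₁_eq_zero_iff_of_re_nonpos hre, hre.not_gt, false_and, and_false,
      false_or, eq_comm]

theorem tsum_zeros_riemannZeta₁ {F : ℂ → ℂ}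
    (hF : Summable fun ρ : {ρ : ℂ // riemannZeta₁ ρ = 0} ↦ F ρ) :
    ∑' ρ : {ρ : ℂ // riemannZeta₁ ρ = 0}, F ρ
      = ∑' ρ : {ρ : ℂ // riemannZeta ρ = 0 ∧ 0 < ρ.re ∧ ρ.re < 1}, F ρ
        + ∑' k : ℕ, F (-2 * (k + 1)) := by
  set nontrivialZeros : Set ℂ := {ρ | riemannZeta ρ = 0 ∧ 0 < ρ.re ∧ ρ.re < 1}
  set trivialZeros : Set ℂ := Set.range fun k : ℕ ↦ (-2 * (k + 1) : ℂ)
  have hunion : {ρ | riemannZeta₁ ρ = 0} = nontrivialZeros ∪ trivialZeros :=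
    Set.ext fun _ ↦ riemannZeta₁_eq_zero_iff_nontrivial_or_trivial
  have hdisj : Disjoint nontrivialZeros trivialZeros := by
    rw [Set.disjoint_left]
    rintro _ hρ ⟨k, rfl⟩
    exact hρ.2.1.not_ge (re_neg_two_mul_add_one_neg k).le
  have hinj : Function.Injective fun k : ℕ ↦ (-2 * (k + 1) : ℂ) := fun k l h ↦ by simpa using h
  have hsummable {S : Set ℂ} (hS : S ⊆ {ρ | riemannZeta₁ ρ = 0}) : Summable (F ∘ ((↑) : S → ℂ)) :=
    hF.comp_injective (Set.inclusion_injective hS)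
  rw [← tsum_range F hinj]
  change ∑' ρ : {ρ | riemannZeta₁ ρ = 0}, F ρ = _
  rw [hunion]
  exact (hsummable (hunion ▸ Set.subset_union_left)).tsum_union_disjoint hdisj
    (hsummable (hunion ▸ Set.subset_union_right))

theorem tsum_zeros_eq_nontrivial_add_trivial (hx : 1 ≤ x) (s : ℂ) {m : ℂ → ℕ}
    (hm : ∀ ρ : ℂ, riemannZeta ρ = 0 → 0 < ρ.re → ρ.re < 1 →
      ∃ g : ℂ → ℂ, AnalyticAt ℂ g ρ ∧ g ρ ≠ 0 ∧
        ∀ᶠ z in 𝓝 ρ, riemannZeta z = (z - ρ) ^ m ρ * g z) :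
    ∑' ρ : {ρ : ℂ // riemannZeta₁ ρ = 0}, (analyticOrderNatAt riemannZeta₁ ρ : ℂ)
          * (x : ℂ) ^ ((ρ : ℂ) - s) / ((ρ : ℂ) - s) ^ 2
      = ∑' ρ : {ρ : ℂ // riemannZeta ρ = 0 ∧ 0 < ρ.re ∧ ρ.re < 1},
          (m ρ : ℂ) * (x : ℂ) ^ ((ρ : ℂ) - s) / ((ρ : ℂ) - s) ^ 2
        + ∑' k : ℕ, (x : ℂ) ^ (-2 * ((k : ℂ) + 1) - s) / (2 * ((k : ℂ) + 1) + s) ^ 2 := by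
  rw [tsum_zeros_riemannZeta₁ (F := fun ρ ↦ (analyticOrderNatAt riemannZeta₁ ρ : ℂ)
    * (x : ℂ) ^ (ρ - s) / (ρ - s) ^ 2) (summable_zero_sum differentiable_riemannZeta₁
      riemannZeta₁_zero_ne_zero expGrowthOn_riemannZeta₁ (by norm_num) (by norm_num)
      (fun _ hρ ↦ (re_lt_one_of_riemannZeta₁_eq_zero hρ).le) hx s)]
  congr 1
  · refine tsum_congr fun ⟨ρ, hζ, hre, hre₁⟩ ↦ ?_
    obtain ⟨g, hg, hgρ, hfactor⟩ := hm ρ hζ hre hre₁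
    rw [analyticOrderNatAt_riemannZeta₁_eq (ne_of_apply_ne re hre₁.ne) hg hgρ hfactor]
  · refine tsum_congr fun k ↦ ?_
    have hre := (re_neg_two_mul_add_one_neg k).le
    have hζ := (riemannZeta₁_eq_zero_iff_of_re_nonpos hre).mpr ⟨k, rfl⟩
    rw [analyticOrderNatAt_riemannZeta₁_of_re_nonpos hre hζ, Nat.cast_one, one_mul, ← neg_sq,
      neg_sub, neg_mul, sub_neg_eq_add, add_comm s]

end Evaluation

theorem explicit_formula_zeta_general (x : ℝ) (hx : 1 < x) (s : ℂ)
    (hs_one : s ≠ 1) (hs_nzero : riemannZeta s ≠ 0)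
    (m : ℂ → ℕ)
    (hm : ∀ ρ : ℂ, riemannZeta ρ = 0 → 0 < ρ.re → ρ.re < 1 →
      ∃ g : ℂ → ℂ, AnalyticAt ℂ g ρ ∧ g ρ ≠ 0 ∧
        ∀ᶠ z in nhds ρ, riemannZeta z = (z - ρ) ^ m ρ * g z) :
    -(deriv riemannZeta s / riemannZeta s) =
      (∑ n ∈ Finset.Icc 2 ⌊x⌋₊,
        (ArithmeticFunction.vonMangoldt n : ℂ) * (n : ℂ) ^ (-s) *
          ((Real.log (x / n) : ℂ) / (Real.log x : ℂ))) +
      (1 / (Real.log x : ℂ)) *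
        deriv (fun z => deriv riemannZeta z / riemannZeta z) s +
      (1 / (Real.log x : ℂ)) *
        ∑' ρ : {ρ : ℂ // riemannZeta ρ = 0 ∧ 0 < ρ.re ∧ ρ.re < 1},
          (m ρ : ℂ) * (x : ℂ) ^ ((ρ : ℂ) - s) / ((ρ : ℂ) - s) ^ 2 +
      (1 / (Real.log x : ℂ)) *
        ∑' k : ℕ, (x : ℂ) ^ (-2 * ((k : ℂ) + 1) - s) / (2 * ((k : ℂ) + 1) + s) ^ 2 -
      (x : ℂ) ^ ((1 : ℂ) - s) / ((1 - s) ^ 2 * (Real.log x : ℂ)) := by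
  have hlog : (Real.log x : ℂ) ≠ 0 := ofReal_ne_zero.mpr (Real.log_pos hx).ne'
  have hsub : 1 - s ≠ 0 := sub_ne_zero.mpr hs_one.symm
  have hformula := sum_vonMangoldt_mul_log hx.le hs_one hs_nzero
  rw [tsum_zeros_eq_nontrivial_add_trivial hx.le s hm] at hformula
  have hderiv : deriv (fun z => deriv riemannZeta z / riemannZeta z) s
      = deriv (logDeriv riemannZeta) s := rfl
  simp only [mul_div_assoc', ← Finset.sum_div, hformula, hderiv, logDeriv_apply]
  field_simp
  ring

/-- (Unconditional explicit formula for `-ζ'/ζ`.) For any `x ≥ 2` and any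
complex `s` not equal to `1`, not a zero of `ζ`, and not a trivial zero `-2, -4, -6, ...`,
`-ζ'/ζ(s) = ∑_{2 ≤ n ≤ x} Λ(n)n^{-s}(log(x/n)/log x) + (1/log x)(ζ'/ζ)'(s)
 + (1/log x)∑_ρ m_ρ x^{ρ-s}/(ρ-s)² + (1/log x)∑_{m≥1} x^{-2m-s}/(2m+s)²
 - x^{1-s}/((1-s)² log x)`,
where `ρ` runs over the zeros of `ζ` with `0 < Re ρ < 1`, with multiplicity `m ρ`. -/
theorem explicit_formula_zeta (x : ℝ) (hx : 2 ≤ x) (s : ℂ)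
    (hs_one : s ≠ 1) (hs_nzero : riemannZeta s ≠ 0)
    (hs_ntriv : ∀ m : ℕ, s ≠ -2 * ((m : ℂ) + 1))
    (m : ℂ → ℕ)
    (hm : ∀ ρ : ℂ, riemannZeta ρ = 0 → 0 < ρ.re → ρ.re < 1 →
      ∃ g : ℂ → ℂ, AnalyticAt ℂ g ρ ∧ g ρ ≠ 0 ∧
        ∀ᶠ z in nhds ρ, riemannZeta z = (z - ρ) ^ m ρ * g z) :
    -(deriv riemannZeta s / riemannZeta s) =
      (∑ n ∈ Finset.Icc 2 ⌊x⌋₊,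
        (ArithmeticFunction.vonMangoldt n : ℂ) * (n : ℂ) ^ (-s) *
          ((Real.log (x / n) : ℂ) / (Real.log x : ℂ))) +
      (1 / (Real.log x : ℂ)) *
        deriv (fun z => deriv riemannZeta z / riemannZeta z) s +
      (1 / (Real.log x : ℂ)) *
        ∑' ρ : {ρ : ℂ // riemannZeta ρ = 0 ∧ 0 < ρ.re ∧ ρ.re < 1},
          (m ρ : ℂ) * (x : ℂ) ^ ((ρ : ℂ) - s) / ((ρ : ℂ) - s) ^ 2 +
      (1 / (Real.log x : ℂ)) *
        ∑' k : ℕ, (x : ℂ) ^ (-2 * ((k : ℂ) + 1) - s) / (2 * ((k : ℂ) + 1) + s) ^ 2 -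
      (x : ℂ) ^ ((1 : ℂ) - s) / ((1 - s) ^ 2 * (Real.log x : ℂ)) :=
  explicit_formula_zeta_general x (by linarith) s hs_one hs_nzero m hm
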